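/- arXiv:2305.02648 — 2 statements merged into one kernel-verified Lean document; each statement's English description precedes it below -/
import Mathlib

section
/- Let C be a countable chain (strict linear order). Then C has finite big Ramsey spectrum (i.e., for every n ≥ 1 the n-element chain has finite big Ramsey degree in C) if and only if C is non-scattered, or C is a scattered chain of finite Hausdorff rank. -/
/-!
Sufficiency rests on a big Ramsey theorem for words. A rigid surjection `φ : ℕ → ℕ` acts on the
finite words over a finite alphabet by substitution, and `finite_big_ramsey_words` says that for
every finite coloring of the words some rigid surjection acts with a number of colors bounded in
terms of the alphabet only. It follows, by fusion and induction on the number of letters that occur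
in a word, from a Carlson–Simpson theorem (`carlson_simpson_one`), which in turn is proved with a
minimal idempotent ultrafilter on the semigroup of words.

A chain is codable (`Cod`) if its elements can be coded by words so that rigid surjections induce
self-embeddings. An `n`-element subset of a codable chain is then coded by a word over the `n`-th
power of the alphabet, so codable chains have finite big Ramsey spectrum. The rational chain, in the
form of the nodes of the binary tree in their in-order, is codable, and every countable
non-scattered chain is biembeddable with it. One-element chains are codable, and codability passes to
reversed chains, finite sums, and sums of `ω` copies of a chain. By induction on `n` there is a finite
list of codable chains such that every chain of Hausdorff rank at most `n` is biembeddable with a finite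
sum of members of the list (`exists_rep`): in an `ω`-indexed sum of such chains, all but finitely
many summands only involve list members that occur infinitely often, and the sum of these
summands absorbs, and is absorbed by, the `ω`-fold multiple of the sum of those members.

For necessity, let `C` be a countable scattered chain. By Hausdorff's theorem `C` arises from
one-element chains by iterated `ℤ`-indexed sums, and each element is labelled by the finite set of
(shifted) absolute values of the indices that lead to it. If `C` does not have finite rank, neither
does the image of any self-embedding, and the labels of the elements of such an image branch
arbitrarily often (`IsKSum.exists_rich`). Hence the oscillation of the labels of two elements, that is,
the number of blocks of their symmetric difference, takes all values from `2` on in every such image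
(`exists_oscCount`), so that the two-element chain does not have finite big Ramsey degree.
-/

universe u v

/-- The chain `A` has big Ramsey degree at most `t` in the chain `C`:
for every finite coloring of the set of order embeddings `A ↪o C` there is an
order embedding `w : C ↪o C` such that the colors of the compositions `w ∘ f`,
`f : A ↪o C`, take at most `t` values. -/
def BigRamseyDegLE (A : Type u) (C : Type v) [LinearOrder A] [LinearOrder C] (t : ℕ) : Prop :=
  ∀ (k : ℕ) (χ : (A ↪o C) → Fin k), ∃ w : C ↪o C,
    (Set.range fun f : A ↪o C => χ (f.trans w)).ncard ≤ t

/-- A chain is scattered if ℚ does not order-embed into it. -/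
def Scattered (C : Type u) [LinearOrder C] : Prop := IsEmpty (ℚ ↪o C)

/-- `InHausdorff n C` says that the chain `C` is order-isomorphic to a member of the level
`H_n` of the Hausdorff hierarchy: `H_0` consists of the empty and the one-element chain,
and `H_{n+1}` consists of the ℤ-indexed lexicographic sums `Σ_{i ∈ ℤ} S_i` with each
`S_i ∈ ⋃_{m ≤ n} H_m`.  This is encoded via a monotone map `c : C → ℤ` whose fibers
(with the induced order) are order-isomorphic to members of lower levels of the hierarchy. -/
def InHausdorff : ℕ → (C : Type u) → [LinearOrder C] → Prop
  | 0, C, _ => Subsingleton C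
  | n+1, C, _ => ∃ c : C → ℤ, Monotone c ∧
      ∀ i : ℤ, ∃ m : ℕ, ∃ _ : m ≤ n, InHausdorff m {x : C // c x = i}
  termination_by n => n
  decreasing_by omega

/-- The chain `C` has finite Hausdorff rank: it is order-isomorphic to a member of `H_n`
for some `n < ω`. -/
def FiniteHausdorffRank (C : Type u) [LinearOrder C] : Prop := ∃ n : ℕ, InHausdorff n C

/-- Two chains are biembeddable if each order-embeds into the other. -/
def Biembeddable (A : Type u) (C : Type v) [LinearOrder A] [LinearOrder C] : Prop :=
  Nonempty (A ↪o C) ∧ Nonempty (C ↪o A)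

/-- A chain `L` is additively indecomposable if whenever `L` is partitioned into an initial
segment `A` and the complementary final segment, `L` order-embeds into `A` or into the
complement of `A`. -/
def AddIndecomposable (L : Type u) [LinearOrder L] : Prop :=
  ∀ A : Set L, (∀ x ∈ A, ∀ y, y ≤ x → y ∈ A) →
    Nonempty (L ↪o A) ∨ Nonempty (L ↪o (Aᶜ : Set L))

/-! ### Variable words and the Carlson–Simpson theorem -/

section Ultrafilter

attribute [local instance] Ultrafilter.mul Ultrafilter.semigroup

/-- A compact right-topological semigroup contains an idempotent `p` which is minimal for the order
`e ≤ p ↔ p * e = e ∧ e * p = e` on idempotents: take any idempotent in a minimal closed left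
ideal. -/
theorem exists_minimal_idempotent {M : Type*} [Nonempty M] [Semigroup M] [TopologicalSpace M]
    [CompactSpace M] [T2Space M] (hc : ∀ r : M, Continuous (· * r)) :
    ∃ p : M, p * p = p ∧ ∀ e : M, e * e = e → p * e = e → e * p = e → e = p := by
  let S : Set (Set M) := {N | IsClosed N ∧ N.Nonempty ∧ ∀ m, ∀ n ∈ N, m * n ∈ N}
  obtain ⟨L, hL⟩ : ∃ L, Minimal (· ∈ S) L := by
    refine zorn_superset _ fun c hcs hch => ?_
    refine ⟨⋂₀ c, ⟨isClosed_sInter fun t ht => (hcs ht).1, ?_, fun m n hn => ?_⟩,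
      fun s hs => Set.sInter_subset_of_mem hs⟩
    · obtain rfl | hne := c.eq_empty_or_nonempty
      · rw [Set.sInter_empty]
        exact Set.univ_nonempty
      rw [Set.sInter_eq_iInter]
      have := hne.coe_sort
      exact IsCompact.nonempty_iInter_of_directed_nonempty_isCompact_isClosed _
        (DirectedOn.directed_val (IsChain.directedOn hch.symm))
        (fun i => (hcs i.2).2.1) (fun i => (hcs i.2).1.isCompact) (fun i => (hcs i.2).1)
    · rw [Set.mem_sInter] at hn ⊢
      exact fun t ht => (hcs ht).2.2 m n (hn t ht)
  obtain ⟨hcl, hne, hid⟩ := hL.prop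
  obtain ⟨p, hp, hpp⟩ := exists_idempotent_in_compact_subsemigroup hc L hne hcl.isCompact
    fun x _ y hy => hid x y hy
  refine ⟨p, hpp, fun e hee hpe hep => ?_⟩
  have he : e ∈ L := hep ▸ hid e p hp
  have hLe : (· * e) '' L = L := by
    apply hL.eq_of_subset
    · refine ⟨(hc e).isClosedMap _ hcl, hne.image _, ?_⟩
      rintro m _ ⟨l, hl, rfl⟩
      exact ⟨m * l, hid _ _ hl, mul_assoc _ _ _⟩
    · rintro _ ⟨l, -, rfl⟩
      exact hid _ _ he
  obtain ⟨l, -, hl⟩ := hLe.symm ▸ hp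
  have hl : l * e = p := hl
  rw [← hpe, ← hl, mul_assoc, hee]

theorem ultrafilter_map_mul {M N : Type*} [Monoid M] [Monoid N] (f : M →* N)
    (U V : Ultrafilter M) : (U * V).map f = U.map f * V.map f := by
  refine Ultrafilter.coe_inj.mp (Filter.ext' fun p => ?_)
  rw [Ultrafilter.eventually_mul]
  simp only [Ultrafilter.coe_map, Filter.eventually_map, Ultrafilter.eventually_mul, map_mul]

/-- The words over `A` with an extra letter `none` (the variable) in which the variable occurs. -/
def varWords (A : Type u) : Set (FreeMonoid (Option A)) :=
  {w | ∃ s t, w = FreeMonoid.map some s * (FreeMonoid.of none * t)}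

theorem varWords_mul_left {A : Type u} (w v : FreeMonoid (Option A)) (hw : v ∈ varWords A) :
    w * v ∈ varWords A := by
  induction w using FreeMonoid.inductionOn' with
  | one => simpa
  | of_mul a w ih =>
    cases a with
    | none => exact ⟨1, w * v, by simp [mul_assoc]⟩
    | some a =>
      obtain ⟨s, t, h⟩ := ih
      exact ⟨FreeMonoid.of a * s, t, by rw [mul_assoc, h]; simp [mul_assoc]⟩

theorem varWords_mul_right {A : Type u} (w v : FreeMonoid (Option A)) (hw : w ∈ varWords A) :
    w * v ∈ varWords A := by
  obtain ⟨s, t, rfl⟩ := hw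
  exact ⟨s, t * v, by simp [mul_assoc]⟩

/-- There are an ultrafilter `p` on words and an ultrafilter `q` on variable words with
`p * q = q`, every substitution of a letter for the variable sending `q` to `p`.
Here `p` is a minimal idempotent, and `q` is an idempotent below `p` in the ideal of variable
words; the image of `q` under a substitution is an idempotent below `p`, hence equal to `p`. -/
theorem exists_variable_ultrafilter (A : Type u) :
    ∃ (p : Ultrafilter (FreeMonoid A)) (q : Ultrafilter (FreeMonoid (Option A))),
      varWords A ∈ q ∧ p.map (FreeMonoid.map some) * q = q ∧
      ∀ a : A, q.map (FreeMonoid.map fun o : Option A => o.getD a) = p := by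
  obtain ⟨p, hpp, hmin⟩ := exists_minimal_idempotent
    (M := Ultrafilter (FreeMonoid A)) Ultrafilter.continuous_mul_left
  set P : Ultrafilter (FreeMonoid (Option A)) := p.map (FreeMonoid.map some) with hP
  have hPP : P * P = P := by rw [hP, ← ultrafilter_map_mul, hpp]
  let I : Set (Ultrafilter (FreeMonoid (Option A))) := {U | varWords A ∈ U}
  have hIl : ∀ U, ∀ V ∈ I, U * V ∈ I := fun U V hV =>
    (Ultrafilter.eventually_mul U V (· ∈ varWords A)).2 <| Filter.Eventually.of_forall fun w =>
      Filter.mem_of_superset hV fun v hv => varWords_mul_left w v hv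
  have hIr : ∀ U ∈ I, ∀ V, U * V ∈ I := fun U hU V =>
    (Ultrafilter.eventually_mul U V (· ∈ varWords A)).2 <|
      Filter.mem_of_superset hU fun w hw => Filter.Eventually.of_forall fun v =>
        varWords_mul_right w v hw
  have hIc : IsClosed I := ultrafilter_isClosed_basic _
  have hIne : I.Nonempty := ⟨pure (FreeMonoid.of none), Ultrafilter.mem_pure.2 ⟨1, 1, by simp⟩⟩
  obtain ⟨r, ⟨v, hv, hvr⟩, hrr⟩ := exists_idempotent_in_compact_subsemigroup
    Ultrafilter.continuous_mul_left ((· * P) '' I) (hIne.image _)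
    (hIc.isCompact.image (Ultrafilter.continuous_mul_left P)) (by
      rintro _ ⟨a, ha, rfl⟩ _ ⟨b, hb, rfl⟩
      exact ⟨a * P * b, hIr _ (hIr _ ha _) _, by simp only [mul_assoc]⟩)
  have hvr : v * P = r := hvr
  have hrP : r * P = r := by rw [← hvr, mul_assoc, hPP]
  have hqq : P * r * (P * r) = P * r := by
    rw [mul_assoc, ← mul_assoc r, hrP, hrr]
  refine ⟨p, P * r, show P * r ∈ I from hIl _ _ (hvr ▸ hIr _ hv _), by rw [← mul_assoc, hPP],
    fun a => ?_⟩
  set σ : FreeMonoid (Option A) →* FreeMonoid A := FreeMonoid.map fun o : Option A => o.getD a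
  have hσP : P.map σ = p := by
    rw [hP, Ultrafilter.map_map]
    have : (σ : FreeMonoid (Option A) → FreeMonoid A) ∘ (FreeMonoid.map some) = id := by
      ext w
      simp only [Function.comp, σ, FreeMonoid.map_map]
      exact DFunLike.congr_fun FreeMonoid.map_id w
    rw [this, Ultrafilter.map_id]
  apply hmin
  · rw [← ultrafilter_map_mul, hqq]
  · conv_lhs => rw [← hσP]
    rw [← ultrafilter_map_mul, ← mul_assoc, hPP]
  · conv_lhs => rw [← hσP]
    rw [← ultrafilter_map_mul, mul_assoc, hrP]

/-- The word `x 0 r₀(x 0) x 1 r₁(x 1) ⋯` with `m` blocks, where `rⱼ(a)` is the result of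
substituting the letter `a` for the variable `none` in `r j`. -/
def blocks {A : Type u} (r : ℕ → List (Option A)) (x : ℕ → A) : ℕ → List A
  | 0 => []
  | m + 1 => blocks r x m ++ x m :: (r m).map fun o => o.getD (x m)

/-- A form of the Carlson–Simpson theorem: for every finite coloring of the words over a finite
alphabet there is an infinite word with infinitely many variables, the `m`-th block starting with
the `m`-th variable and containing no other one, such that all the words `s ++ blocks r x m`
obtained by substituting letters and cutting off at the first occurrence of a new variable have the
same color. The variable words are chosen recursively along the ultrafilter `q`; the color of a
variable word is that of the part that precedes the first occurrence of its variable. -/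
theorem carlson_simpson_one {A : Type u} {κ : Type v} [Finite A] [Finite κ] (χ : List A → κ) :
    ∃ (c : κ) (s : List A) (r : ℕ → List (Option A)),
      ∀ x m, χ (s ++ blocks r x m) = c := by
  obtain ⟨p, q, hqV, hpq, hqp⟩ := exists_variable_ultrafilter A
  -- the letters of a word that precede the first occurrence of the variable
  let pre : FreeMonoid (Option A) → List A := fun w =>
    ((FreeMonoid.toList w).takeWhile Option.isSome).reduceOption
  have hpre : ∀ (s : List A) (w : List (Option A)),
      pre (FreeMonoid.ofList (s.map some ++ none :: w)) = s := by
    intro s w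
    induction s with
    | nil => simp [pre]
    | cons a s ih => simpa [pre, List.reduceOption_cons_of_some] using ih
  obtain ⟨c, hc⟩ : ∃ c, ∀ᶠ w in (q : Filter _), χ (pre w) = c := by
    have : Finite (Set.univ : Set κ) := inferInstance
    have h := (Ultrafilter.eventually_exists_mem_iff (f := q) (is := (Set.univ : Set κ))
      (P := fun c w => χ (pre w) = c) Set.finite_univ).1 (by simp)
    simpa using h
  let C : Set (FreeMonoid (Option A)) := {w | χ (pre w) = c}
  let D : Set (FreeMonoid A) := {s | ∀ᶠ w in (q : Filter _), FreeMonoid.map some s * w ∈ C}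
  have hD1 : (1 : FreeMonoid A) ∈ D := by simpa [D, C] using hc
  -- this is where `p * q = q` enters
  have hDD : ∀ s ∈ D, ∀ᶠ t in (p : Filter _), s * t ∈ D := by
    intro s hs
    have hs : ∀ᶠ w in (q : Filter _), FreeMonoid.map some s * w ∈ C := hs
    rw [← hpq, Ultrafilter.eventually_mul] at hs
    simp only [Ultrafilter.coe_map, Filter.eventually_map] at hs
    filter_upwards [hs] with t ht
    simpa [D, mul_assoc] using ht
  have step : ∀ F : Finset (FreeMonoid A), (∀ s ∈ F, s ∈ D) →
      ∃ w ∈ varWords A, ∀ s ∈ F, FreeMonoid.map some s * w ∈ C ∧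
        ∀ a : A, s * FreeMonoid.map (fun o : Option A => o.getD a) w ∈ D := by
    intro F hF
    have h1 : ∀ᶠ w in (q : Filter _), ∀ s ∈ F, FreeMonoid.map some s * w ∈ C ∧
        ∀ a : A, s * FreeMonoid.map (fun o : Option A => o.getD a) w ∈ D := by
      rw [Filter.eventually_all_finset]
      intro s hs
      have hs' : ∀ᶠ w in (q : Filter _), FreeMonoid.map some s * w ∈ C := hF s hs
      refine hs'.and (Filter.eventually_all.2 fun a => ?_)
      have := hDD s (hF s hs)
      rw [← hqp a] at this
      simpa only [Ultrafilter.coe_map, Filter.eventually_map] using this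
    obtain ⟨w, hw1, hw2⟩ := (h1.and hqV).exists
    exact ⟨w, hw2, hw1⟩
  classical
  have := Fintype.ofFinite A
  choose! W hWV hW using step
  let nxt : Finset (FreeMonoid A) → Finset (FreeMonoid A) := fun F =>
    (F ×ˢ Finset.univ).image fun sa : FreeMonoid A × A =>
      sa.1 * FreeMonoid.map (fun o : Option A => o.getD sa.2) (W F)
  let Fs : ℕ → Finset (FreeMonoid A) := fun m => nxt^[m] {1}
  have hFs : ∀ m, ∀ s ∈ Fs m, s ∈ D := by
    intro m
    induction m with
    | zero => simpa [Fs] using hD1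
    | succ m ih =>
      intro s hs
      simp only [Fs, Function.iterate_succ_apply', nxt, Finset.mem_image, Finset.mem_product] at hs
      obtain ⟨⟨t, a⟩, ⟨ht, -⟩, rfl⟩ := hs
      exact (hW (Fs m) ih t ht).2 a
  have hsplit : ∀ m, ∃ (s : List A) (t : List (Option A)),
      W (Fs m) = FreeMonoid.ofList (s.map some ++ none :: t) := fun m => by
    obtain ⟨s, t, h⟩ := hWV (Fs m) (hFs m)
    exact ⟨FreeMonoid.toList s, FreeMonoid.toList t, h⟩
  choose s t hst using hsplit
  refine ⟨c, s 0, fun m => t m ++ (s (m + 1)).map some, fun x m => ?_⟩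
  have key : ∀ m, ∃ u ∈ Fs m, FreeMonoid.toList u ++ s m =
      s 0 ++ blocks (fun m => t m ++ (s (m + 1)).map some) x m := by
    intro m
    induction m with
    | zero => exact ⟨1, by simp [Fs], by simp [blocks]⟩
    | succ m ih =>
      obtain ⟨u, hu, hus⟩ := ih
      refine ⟨u * FreeMonoid.map (fun o : Option A => o.getD (x m)) (W (Fs m)), ?_, ?_⟩
      · simp only [Fs, Function.iterate_succ_apply', nxt, Finset.mem_image, Finset.mem_product]
        exact ⟨(u, x m), ⟨hu, Finset.mem_univ _⟩, rfl⟩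
      · rw [hst, blocks, ← List.append_assoc, ← hus, FreeMonoid.toList_mul, FreeMonoid.toList_map]
        simp [Function.comp_def]
  obtain ⟨u, hu, hus⟩ := key m
  have := (hW (Fs m) (hFs m) u hu).1
  rw [← hus]
  have h2 : FreeMonoid.map some u * W (Fs m) =
      FreeMonoid.ofList ((FreeMonoid.toList u ++ s m).map some ++ none :: t m) := by
    rw [hst]; simp; rfl
  rw [h2] at this
  simpa only [C, Set.mem_ofPred_eq, hpre] using this

end Ultrafilter

/-! ### Rigid surjections and big Ramsey degrees of words -/

/-- A rigid surjection `φ : ℕ → ℕ`, i.e. a surjection whose values appear for the first time in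
increasing order, together with the map `f` giving the position `f m` of the first occurrence of
the value `m`. -/
structure Rig where
  φ : ℕ → ℕ
  f : ℕ → ℕ
  φ_f : ∀ m, φ (f m) = m
  φ_lt : ∀ m i, i < f m → φ i < m

/-- The word formed by the first `m` letters of `x`. -/
def word {B : Type u} (x : ℕ → B) (m : ℕ) : List B := (List.range m).map x

theorem word_congr {B : Type u} {x y : ℕ → B} {m : ℕ} (h : ∀ i < m, x i = y i) :
    word x m = word y m :=
  List.map_congr_left fun i hi => h i (List.mem_range.1 hi)

theorem word_succ {B : Type u} (x : ℕ → B) (m : ℕ) : word x (m + 1) = word x m ++ [x m] := by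
  simp [word, List.range_succ]

namespace Rig

theorem f_strictMono (Φ : Rig) : StrictMono Φ.f := by
  intro a b hab
  by_contra! h
  rcases h.lt_or_eq with h | h
  · have := Φ.φ_lt _ _ h
    rw [Φ.φ_f] at this
    omega
  · have := congrArg Φ.φ h
    rw [Φ.φ_f, Φ.φ_f] at this
    omega

theorem le_f (Φ : Rig) (m : ℕ) : m ≤ Φ.f m := Φ.f_strictMono.id_le m

theorem φ_le (Φ : Rig) (i : ℕ) : Φ.φ i ≤ i :=
  Nat.lt_succ_iff.1 (Φ.φ_lt _ _ ((Nat.lt_succ_self i).trans_le (Φ.le_f (i + 1))))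

theorem f_zero (Φ : Rig) : Φ.f 0 = 0 := by
  by_contra h
  exact Nat.not_lt_zero _ (Φ.φ_lt 0 0 (Nat.pos_of_ne_zero h))

/-- Composition of rigid surjections: first `Φ.φ`, then `θ.φ`. -/
def comp (Φ θ : Rig) : Rig where
  φ := θ.φ ∘ Φ.φ
  f := Φ.f ∘ θ.f
  φ_f m := by simp [Φ.φ_f, θ.φ_f]
  φ_lt m i hi := θ.φ_lt _ _ (Φ.φ_lt _ _ hi)

/-- The identity map of `ℕ` as a rigid surjection. -/
protected def id : Rig := ⟨id, id, fun _ => rfl, fun _ _ => id⟩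

/-- The action of a rigid surjection on finite words: `x₀ ⋯ xₘ₋₁` becomes
`x_{φ 0} x_{φ 1} ⋯`, cut off at position `f m`, where the letter `xₘ` would be needed. -/
def act {B : Type u} (Φ : Rig) (l : List B) : List B :=
  (List.range (Φ.f l.length)).filterMap fun i => l[Φ.φ i]?

theorem act_word {B : Type u} (Φ : Rig) (x : ℕ → B) (m : ℕ) :
    Φ.act (word x m) = word (x ∘ Φ.φ) (Φ.f m) := by
  have : ∀ i ∈ List.range (Φ.f m), (word x m)[Φ.φ i]? = (some ∘ (x ∘ Φ.φ)) i := by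
    intro i hi
    have := Φ.φ_lt _ _ (List.mem_range.1 hi)
    simp [word, this]
  have hl : (word x m).length = m := by simp [word]
  rw [act, hl, List.filterMap_congr this, List.filterMap_eq_map, word]

theorem comp_act_word {B : Type u} (Φ θ : Rig) (x : ℕ → B) (m : ℕ) :
    (Φ.comp θ).act (word x m) = Φ.act (word (x ∘ θ.φ) (θ.f m)) := by
  rw [act_word, act_word]
  rfl

theorem exists_word {B : Type u} [Nonempty B] (l : List B) : ∃ x m, word x m = l := by
  obtain ⟨b⟩ := ‹Nonempty B›
  refine ⟨fun i => l.getD i b, l.length, List.ext_getElem (by simp [word]) fun i h1 h2 => ?_⟩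
  simp [word, h2]

section ofTails

variable (t : ℕ → List ℕ)

/-- The word `0 t₀ 1 t₁ ⋯ (m - 1) tₘ₋₁`. -/
def pref : ℕ → List ℕ
  | 0 => []
  | m + 1 => pref m ++ m :: t m

theorem pref_mono {m n : ℕ} (h : m ≤ n) : pref t m <+: pref t n := by
  induction n, h using Nat.le_induction with
  | base => exact List.prefix_refl _
  | succ n _ ih => exact ih.trans (List.prefix_append _ _)

theorem le_length_pref (m : ℕ) : m ≤ (pref t m).length := by
  induction m with
  | zero => simp
  | succ m ih => simp only [pref, List.length_append, List.length_cons]; omega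

theorem pref_getD {m i : ℕ} (h : i < (pref t m).length) :
    (pref t (i + 1)).getD i 0 = (pref t m)[i] := by
  have hi : i < (pref t (i + 1)).length := le_length_pref t (i + 1)
  rw [List.getD_eq_getElem _ _ hi]
  rcases le_total m (i + 1) with hm | hm
  · exact ((pref_mono t hm).getElem h).symm
  · exact (pref_mono t hm).getElem hi

/-- The rigid surjection with sequence of values `0 t₀ 1 t₁ ⋯`, where `tⱼ` has entries at most `j`. -/
def ofTails (h : ∀ j, ∀ i ∈ t j, i ≤ j) : Rig where
  φ i := (pref t (i + 1)).getD i 0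
  f m := (pref t m).length
  φ_f m := by
    have : (pref t m).length < (pref t (m + 1)).length := by simp [pref]
    rw [pref_getD t this]
    simp [pref]
  φ_lt m i hi := by
    rw [pref_getD t hi]
    have : ∀ m, ∀ j ∈ pref t m, j < m := by
      intro m
      induction m with
      | zero => simp [pref]
      | succ m ih =>
        intro j hj
        simp only [pref, List.mem_append, List.mem_cons] at hj
        rcases hj with hj | rfl | hj
        · exact (ih j hj).trans (Nat.lt_succ_self m)
        · exact Nat.lt_succ_self _
        · exact Nat.lt_succ_of_le (h m j hj)
    exact this m _ (List.getElem_mem hi)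

theorem ofTails_word (h : ∀ j, ∀ i ∈ t j, i ≤ j) {B : Type u} (x : ℕ → B) (m : ℕ) :
    word (x ∘ (ofTails t h).φ) ((ofTails t h).f m) = (pref t m).map x := by
  apply List.ext_getElem
  · simp [word, ofTails]
  · intro i h1 h2
    simp only [List.length_map] at h2
    have := pref_getD t h2
    simp only [word, ofTails, List.getElem_map, List.getElem_range, Function.comp]
    rw [this]

end ofTails

/-- `θ` is the identity on the first `n + 1` letters. -/
def Fixes (θ : Rig) (n : ℕ) : Prop := ∀ i ≤ n, θ.φ i = i ∧ θ.f i = i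

/-- Fusion: a sequence of requirements on rigid surjections, the `n`-th of which can be met by
composing with some `θ` that fixes `0, …, n`, is preserved by such compositions, and is closed
under limits, can be met simultaneously. -/
theorem fusion (Good : ℕ → Rig → Prop)
    (step : ∀ n (Φ : Rig), ∃ θ, Fixes θ n ∧ Good n (Φ.comp θ))
    (pres : ∀ n (Φ θ : Rig), Good n Φ → Fixes θ n → Good n (Φ.comp θ))
    (lim : ∀ n (Φ : Rig), (∀ N, ∃ Ψ, Good n Ψ ∧ ∀ i ≤ N, Ψ.φ i = Φ.φ i ∧ Ψ.f i = Φ.f i) → Good n Φ) :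
    ∃ Φ, ∀ n, Good n Φ := by
  choose θ hθ hg using step
  let S : ℕ → Rig := fun n => n.rec (Rig.id.comp (θ 0 Rig.id)) fun n Φ => Φ.comp (θ (n + 1) Φ)
  have hS : ∀ n, S (n + 1) = (S n).comp (θ (n + 1) (S n)) := fun n => rfl
  have hGS : ∀ n, Good n (S n) := by
    rintro (_ | n)
    · exact hg _ _
    · exact hg _ _
  have hGS' : ∀ n N, n ≤ N → Good n (S N) := by
    intro n N h
    induction N, h using Nat.le_induction with
    | base => exact hGS n
    | succ N hN ih =>
      exact pres _ _ _ ih fun i hi => hθ _ _ i (by omega)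
  have hst : ∀ n N, n ≤ N → ∀ i ≤ n, (S N).φ i = (S n).φ i ∧ (S N).f i = (S n).f i := by
    intro n N h
    induction N, h using Nat.le_induction with
    | base => exact fun _ _ => ⟨rfl, rfl⟩
    | succ N hN ih =>
      intro i hi
      rw [hS]
      refine ⟨Eq.trans ?_ (ih i hi).1, Eq.trans ?_ (ih i hi).2⟩
      · have := (S N).φ_le i
        exact (hθ _ _ _ (by omega)).1
      · exact congrArg (S N).f (hθ _ _ _ (by omega)).2
  let L : Rig :=
    { φ := fun i => (S i).φ i
      f := fun m => (S m).f m
      φ_f := fun m => by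
        have h1 := (hst _ _ (le_max_left ((S m).f m) m) _ le_rfl).1
        have h2 := (hst _ _ (le_max_right ((S m).f m) m) _ le_rfl).2
        have h3 := Rig.φ_f (S (max ((S m).f m) m)) m
        rw [h2] at h3
        rw [← h1]
        exact h3
      φ_lt := fun m i hi => by
        have h1 := (hst _ _ (le_max_left i m) _ le_rfl).1
        have h2 := (hst _ _ (le_max_right i m) _ le_rfl).2
        rw [← h1]
        rw [← h2] at hi
        exact Rig.φ_lt _ _ _ hi }
  refine ⟨L, fun n => lim n L fun N => ⟨S (max n N), hGS' _ _ (le_max_left _ _), fun i hi => ?_⟩⟩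
  exact hst i (max n N) (hi.trans (le_max_right _ _)) i le_rfl

end Rig

/-- Carlson–Simpson applied to the alphabet `{0, …, n}`: after composing with a rigid surjection that
fixes `0, …, n`, the color of a word all of whose letters occur among its first `n + 1` letters
depends only on these first `n + 1` letters. -/
theorem exists_fixes_good {B : Type u} {κ : Type v} [Finite B] [Finite κ] (χ : List B → κ)
    (n : ℕ) (Φ : Rig) : ∃ θ : Rig, θ.Fixes n ∧ ∀ (x : ℕ → B) m, n < m →
      (∀ i < m, ∃ j ≤ n, x i = x j) →
      χ ((Φ.comp θ).act (word x m)) = χ ((Φ.comp θ).act (word x (n + 1))) := by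
  obtain ⟨c, s, r, hc⟩ := carlson_simpson_one (A := Fin (n + 1))
    fun (z : List (Fin (n + 1))) (v : Fin (n + 1) → B) =>
      χ (Φ.act ((List.finRange (n + 1) ++ z).map v))
  let t : ℕ → List ℕ := fun j => if j < n then [] else if j = n then s.map Fin.val else
    (r (j - n - 1)).map fun o => o.elim j Fin.val
  have ht : ∀ j, ∀ i ∈ t j, i ≤ j := by
    intro j i hi
    simp only [t] at hi
    split_ifs at hi with h1 h2
    · simp at hi
    · simp only [List.mem_map] at hi
      obtain ⟨a, -, rfl⟩ := hi
      omega
    · simp only [List.mem_map] at hi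
      obtain ⟨a, -, rfl⟩ := hi
      cases a with
      | none => simp
      | some a => simp; omega
  have hpref : ∀ m ≤ n, Rig.pref t m = List.range m := by
    intro m hm
    induction m with
    | zero => rfl
    | succ m ih => rw [Rig.pref, ih (by omega), List.range_succ]; simp [t, show m < n by omega]
  have hn : Rig.pref t (n + 1) = List.range (n + 1) ++ s.map Fin.val := by
    rw [Rig.pref, hpref n le_rfl, List.range_succ]; simp [t]
  have key : ∀ (x : ℕ → B) m, (∀ i < n + 1 + m, ∃ j ≤ n, x i = x j) →
      χ ((Φ.comp (Rig.ofTails t ht)).act (word x (n + 1 + m))) = c fun j => x j := by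
    intro x m hx
    have hx' : ∀ j, ∃ a : Fin (n + 1), j < m → x (n + 1 + j) = x a := by
      intro j
      by_cases hj : j < m
      · obtain ⟨a, ha, h⟩ := hx (n + 1 + j) (by omega)
        exact ⟨⟨a, by omega⟩, fun _ => h⟩
      · exact ⟨0, fun h => absurd h hj⟩
    choose a ha using hx'
    rw [Rig.comp_act_word, Rig.ofTails_word, ← hc a m]
    congr 2
    clear hx
    induction m with
    | zero =>
      change List.map x (Rig.pref t (n + 1)) = _
      rw [hn]
      simp [blocks, ← List.map_coe_finRange_eq_range, Function.comp_def]
    | succ m ih =>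
      rw [← Nat.add_assoc, Rig.pref, List.map_append, ih fun j hj => ha j (by omega), blocks]
      simp only [List.map_append, List.append_assoc, List.map_cons, List.map_map]
      rw [ha m (by omega)]
      congr 4
      have : t (n + 1 + m) = (r m).map fun o => o.elim (n + 1 + m) Fin.val := by
        simp only [t]
        rw [if_neg (by omega), if_neg (by omega), show n + 1 + m - n - 1 = m by omega]
      rw [this, List.map_map]
      refine List.map_congr_left fun o _ => ?_
      cases o with
      | none => simpa using ha m (by omega)
      | some b => rfl
  refine ⟨Rig.ofTails t ht, fun i hi => ?_, fun x m hm hx => ?_⟩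
  · have : (Rig.ofTails t ht).f i = i := by simp [Rig.ofTails, hpref i hi]
    refine ⟨?_, this⟩
    conv_lhs => rw [← this]
    exact Rig.φ_f _ _
  · obtain ⟨m, rfl⟩ := Nat.exists_eq_add_of_le (show n + 1 ≤ m from hm)
    rw [key x m hx]
    exact (key x 0 fun i hi => hx i (by omega)).symm

/-- The fusion of `exists_fixes_good` over all `n`: the color of a word depends only on its initial
segment up to the position at which its last new letter appears. -/
theorem exists_good {B : Type u} {κ : Type v} [Finite B] [Finite κ] (χ : List B → κ) :
    ∃ Φ : Rig, ∀ n (x : ℕ → B) m, n < m → (∀ i < m, ∃ j ≤ n, x i = x j) →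
      χ (Φ.act (word x m)) = χ (Φ.act (word x (n + 1))) := by
  refine Rig.fusion (fun n Φ => ∀ (x : ℕ → B) m, n < m → (∀ i < m, ∃ j ≤ n, x i = x j) →
      χ (Φ.act (word x m)) = χ (Φ.act (word x (n + 1)))) (exists_fixes_good χ) ?_ ?_
  · intro n Φ θ h hθ x m hm hx
    have hx' : ∀ i < θ.f m, ∃ j ≤ n, (x ∘ θ.φ) i = (x ∘ θ.φ) j := by
      intro i hi
      obtain ⟨j, hj, h⟩ := hx _ (θ.φ_lt _ _ hi)
      refine ⟨j, hj, ?_⟩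
      simp only [Function.comp, h, (hθ j hj).1]
    have h1 : n < θ.f (n + 1) := θ.le_f (n + 1)
    have h2 : θ.f (n + 1) ≤ θ.f m := θ.f_strictMono.monotone hm
    rw [Rig.comp_act_word, Rig.comp_act_word, h _ _ (h1.trans_le h2) hx',
      h _ _ h1 fun i hi => hx' i (hi.trans_le h2)]
  · intro n Φ h x m hm hx
    obtain ⟨Ψ, hΨ, hag⟩ := h (Φ.f m)
    have : ∀ k ≤ m, Φ.act (word x k) = Ψ.act (word x k) := by
      intro k hk
      rw [Rig.act_word, Rig.act_word, (hag k (hk.trans (Φ.le_f m))).2]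
      refine word_congr fun i hi => ?_
      have := Φ.f_strictMono.monotone hk
      simp [(hag i (by omega)).1]
    rw [this m le_rfl, this (n + 1) hm, hΨ x m hm hx]

/-- The position `n` at which the last new letter of `x 0 ⋯ x m` appears. -/
theorem exists_last_new {B : Type u} (x : ℕ → B) (m : ℕ) :
    ∃ n < m + 1, (∀ i < m + 1, ∃ j ≤ n, x i = x j) ∧ ∀ j < n, x j ≠ x n := by
  induction m with
  | zero => exact ⟨0, by omega, fun i hi => ⟨0, le_rfl, by congr; omega⟩, by simp⟩
  | succ m ih =>
    obtain ⟨n, hn, h1, h2⟩ := ih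
    by_cases h : ∃ j < m + 1, x j = x (m + 1)
    · obtain ⟨j, hj, h⟩ := h
      refine ⟨n, by omega, fun i hi => ?_, h2⟩
      rcases Nat.lt_succ_iff_lt_or_eq.1 hi with hi | rfl
      · exact h1 i hi
      · exact h ▸ h1 j hj
    · push Not at h
      exact ⟨m + 1, by omega, fun i hi => ⟨i, by omega, rfl⟩, h⟩

/-- The bound `finite_big_ramsey_words` for the words with at most `k` distinct letters, by induction on
`k`: by `exists_good` the color of a nonempty word depends only on its initial segment `l b` ending
in its last new letter `b`, and `l` has fewer distinct letters. The induction hypothesis is applied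
to the coloring that sends `l` to the function taking `b` to the color of `l b`. -/
theorem finite_big_ramsey_words_aux (B : Type) [Finite B] (k : ℕ) :
    ∃ t : ℕ, ∀ (κ : Type) [Finite κ] (χ : List B → κ), ∃ Φ : Rig,
      {c | ∃ x m, (x '' Set.Iio m).ncard ≤ k ∧ χ (Φ.act (word x m)) = c}.ncard ≤ t := by
  induction k with
  | zero =>
    refine ⟨1, fun κ _ χ => ⟨Rig.id, ?_⟩⟩
    rw [Set.ncard_le_one]
    have : ∀ c ∈ {c | ∃ x m, (x '' Set.Iio m).ncard ≤ 0 ∧ χ (Rig.id.act (word x m)) = c},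
        c = χ (Rig.id.act []) := by
      rintro c ⟨x, m, h, rfl⟩
      have h : (x '' Set.Iio m).ncard = 0 := by omega
      rw [Set.ncard_eq_zero ((Set.finite_Iio m).image x), Set.image_eq_empty] at h
      obtain rfl : m = 0 := by
        by_contra hm
        exact Set.eq_empty_iff_forall_notMem.1 h 0 (Nat.pos_of_ne_zero hm)
      rfl
    intro a ha b hb
    rw [this a ha, this b hb]
  | succ k ih =>
    obtain ⟨t, ht⟩ := ih
    refine ⟨t * Nat.card B + 1, fun κ _ χ => ?_⟩
    obtain ⟨Φ₁, h₁⟩ := exists_good χ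
    obtain ⟨Φ₂, h₂⟩ := ht (B → κ) fun l b => χ (Φ₁.act (l ++ [b]))
    refine ⟨Φ₁.comp Φ₂, ?_⟩
    set K := {c | ∃ x m, (x '' Set.Iio m).ncard ≤ k ∧
      (fun l b => χ (Φ₁.act (l ++ [b]))) (Φ₂.act (word x m)) = c} with hK
    have hsub : {c | ∃ x m, (x '' Set.Iio m).ncard ≤ k + 1 ∧
        χ ((Φ₁.comp Φ₂).act (word x m)) = c} ⊆
        insert (χ ((Φ₁.comp Φ₂).act []))
          ((fun p : (B → κ) × B => p.1 p.2) '' (K ×ˢ (Set.univ : Set B))) := by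
      rintro c ⟨x, m, hm, rfl⟩
      cases m with
      | zero => left; rfl
      | succ m =>
        right
        obtain ⟨n, hn, hx, hne⟩ := exists_last_new x m
        refine ⟨(_, x n), ⟨⟨x, n, ?_, rfl⟩, Set.mem_univ _⟩, ?_⟩
        · have hnot : x n ∉ x '' Set.Iio n := by
            rintro ⟨j, hj, h⟩
            exact hne j hj h
          have h3 : insert (x n) (x '' Set.Iio n) ⊆ x '' Set.Iio (m + 1) := by
            rw [Set.insert_subset_iff]
            exact ⟨⟨n, hn, rfl⟩, Set.image_mono (Set.Iio_subset_Iio hn.le)⟩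
          have h4 := Set.ncard_le_ncard h3
          rw [Set.ncard_insert_of_notMem hnot] at h4
          omega
        · rw [Rig.comp_act_word]
          have e1 : Φ₂.f n < Φ₂.f (m + 1) := Φ₂.f_strictMono hn
          rw [h₁ (Φ₂.f n) _ _ e1, word_succ]
          · simp [Φ₂.φ_f, Rig.act_word]
          · intro i hi
            obtain ⟨j, hj, h⟩ := hx _ (Φ₂.φ_lt _ _ hi)
            exact ⟨Φ₂.f j, Φ₂.f_strictMono.monotone hj, by simpa [Φ₂.φ_f] using h⟩
    refine (Set.ncard_le_ncard hsub).trans ((Set.ncard_insert_le _ _).trans ?_)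
    refine Nat.add_le_add_right ((Set.ncard_image_le).trans ?_) 1
    rw [Set.ncard_prod, Set.ncard_univ]
    exact Nat.mul_le_mul_right _ h₂

/-- Words over a finite alphabet have finite big Ramsey degrees: there is a bound `t`, depending only
on the alphabet, such that for every finite coloring of the words some rigid surjection acts on the
words with at most `t` colors in its range. -/
theorem finite_big_ramsey_words (B : Type) [Finite B] :
    ∃ t : ℕ, ∀ (κ : Type) [Finite κ] (χ : List B → κ), ∃ Φ : Rig,
      {c | ∃ x m, χ (Φ.act (word x m)) = c}.ncard ≤ t := by
  obtain ⟨t, ht⟩ := finite_big_ramsey_words_aux B (Nat.card B)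
  refine ⟨t, fun κ _ χ => ?_⟩
  obtain ⟨Φ, hΦ⟩ := ht κ χ
  refine ⟨Φ, (Set.ncard_le_ncard ?_).trans hΦ⟩
  rintro c ⟨x, m, h⟩
  exact ⟨x, m, Set.ncard_le_card _, h⟩

/-! ### Codable chains -/

/-- A chain is codable if its elements can be coded by words over a finite nonempty alphabet in a way
compatible with rigid surjections. `R x m c` says that the word `x 0 ⋯ x (m - 1)` codes `c`; the
codes of `c` are closed under end extension, a word codes at most one element, and every rigid
surjection `Φ` induces a self-embedding `w` of the chain such that `Φ` sends codes of `c` to codes of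
`w c`. -/
def Cod (C : Type u) [LinearOrder C] : Prop :=
  ∃ (A : Type) (_ : Finite A) (_ : Nonempty A) (R : (ℕ → A) → ℕ → C → Prop),
    (∀ c, ∃ x m, R x m c) ∧
    (∀ x x' m m' c, R x m c → m ≤ m' → (∀ i < m, x i = x' i) → R x' m' c) ∧
    (∀ x m c c', R x m c → R x m c' → c = c') ∧
    ∀ Φ : Rig, ∃ w : C ↪o C, ∀ x m c, R x m c → R (x ∘ Φ.φ) (Φ.f m) (w c)

/-- In a codable chain all finite chains have finite big Ramsey degree: an `n`-element subset is coded
by a word over the alphabet of functions `Fin n → A`, to which `finite_big_ramsey_words` applies. -/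
theorem Cod.bigRamseyDegLE {C : Type u} [LinearOrder C] (h : Cod C) (n : ℕ) :
    ∃ t, BigRamseyDegLE (Fin n) C t := by
  obtain ⟨A, _, _, R, hex, hmono, hfun, hw⟩ := h
  obtain ⟨t, ht⟩ := finite_big_ramsey_words (Fin n → A)
  refine ⟨t, fun k χ => ?_⟩
  classical
  let Q : List (Fin n → A) → (Fin n ↪o C) → Prop := fun u f =>
    ∃ x m, word x m = u ∧ ∀ j, R (fun i => x i j) m (f j)
  have hQ : ∀ u f g, Q u f → Q u g → f = g := by
    rintro u f g ⟨x, m, rfl, hf⟩ ⟨y, m', h, hg⟩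
    have hm : m' = m := by simpa [word] using congrArg List.length h
    subst hm
    ext j
    refine hfun _ _ _ _ (hf j) (hmono _ _ _ _ _ (hg j) le_rfl fun i hi => ?_)
    have := congrArg (fun l => l[i]?) h
    simp [word, hi] at this
    rw [this]
  obtain ⟨Φ, hΦ⟩ := ht (Option (Fin k)) fun u =>
    if h : ∃ f, Q u f then some (χ h.choose) else none
  obtain ⟨w, hw⟩ := hw Φ
  refine ⟨w, le_trans ?_ hΦ⟩
  rw [← Set.ncard_image_of_injective _ (Option.some_injective (Fin k))]
  refine Set.ncard_le_ncard ?_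
  rintro _ ⟨_, ⟨f, rfl⟩, rfl⟩
  choose x m hx using fun j => hex (f j)
  obtain ⟨M, hM⟩ : ∃ M, ∀ j, m j ≤ M :=
    ⟨Finset.univ.sup m, fun j => Finset.le_sup (Finset.mem_univ j)⟩
  refine ⟨fun i j => x j i, M, ?_⟩
  have hq : Q (Φ.act (word (fun i j => x j i) M)) (f.trans w) := by
    rw [Rig.act_word]
    refine ⟨_, _, rfl, fun j => ?_⟩
    exact hw (x j) M (f j) (hmono _ _ _ _ _ (hx j) (hM j) fun _ _ => rfl)
  have hh : ∃ f, Q (Φ.act (word (fun i j => x j i) M)) f := ⟨_, hq⟩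
  rw [dif_pos hh, hQ _ _ _ hh.choose_spec hq]

/-- Big Ramsey degrees are invariant under biembeddability. -/
theorem BigRamseyDegLE.of_biembed {A : Type u} {B : Type v} [LinearOrder A] [LinearOrder B]
    (e : A ↪o B) (e' : B ↪o A) {n t : ℕ} (h : BigRamseyDegLE (Fin n) A t) :
    BigRamseyDegLE (Fin n) B t := by
  intro k χ
  obtain ⟨w, hw⟩ := h k fun f => χ (f.trans e)
  refine ⟨(e'.trans w).trans e, le_trans (Set.ncard_le_ncard ?_) hw⟩
  rintro _ ⟨f, rfl⟩
  exact ⟨f.trans e', rfl⟩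

theorem Cod.of_subsingleton (C : Type u) [LinearOrder C] [Subsingleton C] : Cod C :=
  ⟨Unit, inferInstance, inferInstance, fun _ _ _ => True, fun _ => ⟨fun _ => (), 0, trivial⟩,
    fun _ _ _ _ _ _ _ _ => trivial, fun _ _ _ _ _ _ => Subsingleton.elim _ _,
    fun _ => ⟨RelEmbedding.refl _, fun _ _ _ _ => trivial⟩⟩

theorem Cod.dual {C : Type u} [LinearOrder C] (h : Cod C) : Cod Cᵒᵈ := by
  obtain ⟨A, hA, hA', R, hex, hmono, hfun, hw⟩ := h
  refine ⟨A, hA, hA', R, hex, hmono, hfun, fun Φ => ?_⟩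
  obtain ⟨w, hw⟩ := hw Φ
  exact ⟨w.dual, hw⟩

/-- Embeddings of `A` and `B` with `f a < g b` for all `a`, `b` combine to an embedding of the sum. -/
theorem sumLex_embedding {A : Type*} {B : Type*} {D : Type*} [LinearOrder A] [LinearOrder B]
    [LinearOrder D] (f : A ↪o D) (g : B ↪o D) (h : ∀ a b, f a < g b) :
    ∃ w : A ⊕ₗ B ↪o D, (∀ a, w (Sum.inlₗ a) = f a) ∧ ∀ b, w (Sum.inrₗ b) = g b := by
  refine ⟨OrderEmbedding.ofStrictMono (fun x => Sum.elim f g (ofLex x)) ?_, fun _ => rfl,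
    fun _ => rfl⟩
  intro x y hxy
  obtain ⟨x, rfl⟩ := toLex.surjective x
  obtain ⟨y, rfl⟩ := toLex.surjective y
  rcases x with x | x <;> rcases y with y | y
  · exact f.strictMono (Sum.Lex.inl_lt_inl_iff.1 hxy)
  · exact h x y
  · exact absurd hxy Sum.Lex.not_inr_lt_inl
  · exact g.strictMono (Sum.Lex.inr_lt_inr_iff.1 hxy)

theorem sumLex_map {A B A' B' : Type*} [LinearOrder A] [LinearOrder B] [LinearOrder A']
    [LinearOrder B'] (f : A ↪o A') (g : B ↪o B') :
    ∃ w : A ⊕ₗ B ↪o A' ⊕ₗ B', (∀ a, w (Sum.inlₗ a) = Sum.inlₗ (f a)) ∧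
      ∀ b, w (Sum.inrₗ b) = Sum.inrₗ (g b) :=
  sumLex_embedding
    (f.trans (OrderEmbedding.ofStrictMono Sum.inlₗ fun _ _ h => Sum.Lex.inl_lt_inl_iff.2 h))
    (g.trans (OrderEmbedding.ofStrictMono Sum.inrₗ fun _ _ h => Sum.Lex.inr_lt_inr_iff.2 h))
    fun _ _ => Sum.Lex.inl_lt_inr _ _

/-- The first letter of a code tells which summand the element belongs to. -/
theorem Cod.sum {C : Type u} {D : Type v} [LinearOrder C] [LinearOrder D] (hC : Cod C)
    (hD : Cod D) : Cod (C ⊕ₗ D) := by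
  obtain ⟨A, hA, hA', R, hex, hmono, hfun, hw⟩ := hC
  obtain ⟨A', _, _, R', hex', hmono', hfun', hw'⟩ := hD
  let T : (ℕ → Bool × A × A') → ℕ → C ⊕ D → Prop := fun x m c =>
    0 < m ∧ Sum.elim (fun c => (x 0).1 = true ∧ R (fun i => (x i).2.1) m c)
      (fun c => (x 0).1 = false ∧ R' (fun i => (x i).2.2) m c) c
  have hT : ∀ x m c, T x m (Sum.inl c) ↔ 0 < m ∧ (x 0).1 = true ∧ R (fun i => (x i).2.1) m c :=
    fun _ _ _ => Iff.rfl
  have hT' : ∀ x m c, T x m (Sum.inr c) ↔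
    0 < m ∧ (x 0).1 = false ∧ R' (fun i => (x i).2.2) m c := fun _ _ _ => Iff.rfl
  clear_value T
  refine ⟨Bool × A × A', inferInstance, inferInstance, fun x m c => T x m (ofLex c),
    fun c => ?_, fun x x' m m' c => ?_, fun x m c c' => ?_, fun Φ => ?_⟩
  · change ∃ x m, T x m (ofLex c)
    generalize ofLex c = c
    rcases c with c | c
    · obtain ⟨x, m, h⟩ := hex c
      exact ⟨fun i => (true, x i, Classical.arbitrary _), m + 1, (hT _ _ _).2 ⟨m.succ_pos, rfl,
        hmono _ _ _ _ _ h (by omega) fun _ _ => rfl⟩⟩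
    · obtain ⟨x, m, h⟩ := hex' c
      exact ⟨fun i => (false, Classical.arbitrary _, x i), m + 1, (hT' _ _ _).2 ⟨m.succ_pos, rfl,
        hmono' _ _ _ _ _ h (by omega) fun _ _ => rfl⟩⟩
  · intro h hm hx
    generalize ofLex c = c at h ⊢
    rcases c with c | c
    · rw [hT] at h ⊢
      exact ⟨by omega, by rw [← hx 0 h.1]; exact h.2.1,
        hmono _ _ _ _ _ h.2.2 hm fun i hi => by rw [hx i hi]⟩
    · rw [hT'] at h ⊢
      exact ⟨by omega, by rw [← hx 0 h.1]; exact h.2.1,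
        hmono' _ _ _ _ _ h.2.2 hm fun i hi => by rw [hx i hi]⟩
  · intro h h'
    apply ofLex.injective
    generalize ofLex c = c at h ⊢
    generalize ofLex c' = c' at h' ⊢
    rcases c with c | c <;> rcases c' with c' | c' <;> simp only [hT, hT'] at h h'
    · exact congrArg _ (hfun _ _ _ _ h.2.2 h'.2.2)
    · simp [h.2.1] at h'
    · simp [h.2.1] at h'
    · exact congrArg _ (hfun' _ _ _ _ h.2.2 h'.2.2)
  · obtain ⟨w, hw⟩ := hw Φ
    obtain ⟨w', hw'⟩ := hw' Φ
    have h0 : Φ.φ 0 = 0 := Nat.le_zero.1 (Φ.φ_le 0)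
    obtain ⟨W, hW, hW'⟩ := sumLex_map w w'
    refine ⟨W, fun x m c h => ?_⟩
    obtain ⟨c, rfl⟩ := toLex.surjective c
    have hm := Φ.le_f m
    rcases c with c | c
    · obtain ⟨h1, h2, h3⟩ := (hT _ _ _).1 h
      have e : ofLex (W (toLex (Sum.inl c))) = Sum.inl (w c) := congrArg ofLex (hW c)
      rw [e, hT]
      exact ⟨by omega, by simpa [h0] using h2, hw _ _ _ h3⟩
    · obtain ⟨h1, h2, h3⟩ := (hT' _ _ _).1 h
      have e : ofLex (W (toLex (Sum.inr c))) = Sum.inr (w' c) := congrArg ofLex (hW' c)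
      rw [e, hT']
      exact ⟨by omega, by simpa [h0] using h2, hw' _ _ _ h3⟩

/-- If `C` is codable, then so is the sum of `ω` copies of `C`. A code of `(i, c)` carries a Boolean
track whose first `true` is in position `i`; a rigid surjection `Φ` moves this position to
`Φ.f i`. -/
theorem Cod.omega {C : Type u} [LinearOrder C] (hC : Cod C) : Cod (ℕ ×ₗ C) := by
  obtain ⟨A, hA, hA', R, hex, hmono, hfun, hw⟩ := hC
  refine ⟨Bool × A, inferInstance, inferInstance, fun x m c => (ofLex c).1 < m ∧
    (x (ofLex c).1).1 = true ∧ (∀ i < (ofLex c).1, (x i).1 = false) ∧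
    R (fun i => (x i).2) m (ofLex c).2, fun c => ?_, fun x x' m m' c => ?_,
    fun x m c c' => ?_, fun Φ => ?_⟩
  · obtain ⟨x, m, h⟩ := hex (ofLex c).2
    refine ⟨fun i => (decide (i = (ofLex c).1), x i), max m ((ofLex c).1 + 1), ?_, ?_, ?_, ?_⟩
    · exact (Nat.lt_succ_self _).trans_le (le_max_right _ _)
    · simp
    · intro i hi
      simpa using hi.ne
    · exact hmono _ _ _ _ _ h (le_max_left _ _) fun _ _ => rfl
  · rintro ⟨h1, h2, h3, h4⟩ hm hx
    refine ⟨by omega, by rw [← hx _ h1]; exact h2, fun i hi => ?_,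
      hmono _ _ _ _ _ h4 hm fun i hi => by rw [hx i hi]⟩
    rw [← hx i (by omega)]
    exact h3 i hi
  · rintro ⟨h1, h2, h3, h4⟩ ⟨h1', h2', h3', h4'⟩
    apply ofLex.injective
    refine Prod.ext ?_ (hfun _ _ _ _ h4 h4')
    rcases lt_trichotomy (ofLex c).1 (ofLex c').1 with h | h | h
    · simp [h3' _ h] at h2
    · exact h
    · simp [h3 _ h] at h2'
  · obtain ⟨w, hw⟩ := hw Φ
    refine ⟨OrderEmbedding.ofStrictMono
      (fun c => toLex (Φ.f (ofLex c).1, w (ofLex c).2)) ?_, ?_⟩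
    · intro c c' h
      rw [Prod.Lex.lt_iff] at h ⊢
      rcases h with h | ⟨h, h'⟩
      · exact Or.inl (Φ.f_strictMono h)
      · exact Or.inr ⟨congrArg Φ.f h, w.strictMono h'⟩
    · rintro x m c ⟨h1, h2, h3, h4⟩
      refine ⟨Φ.f_strictMono h1, ?_, fun i hi => h3 _ (Φ.φ_lt _ _ hi), hw _ _ _ h4⟩
      change (x (Φ.φ (Φ.f _))).1 = true
      rw [Φ.φ_f]
      exact h2

/-! ### Non-scattered chains -/

/-- The ternary sequences which are constantly `1` from their first `1` on, ordered
lexicographically; they stand for the nodes of the binary tree `{0, 2}^{<ω}` in their in-order. This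
is a codable copy of `ℚ`. -/
def Q0 : Type := {x : Lex (ℕ → Fin 3) // ∃ m, ∀ i, ofLex x i = 1 ↔ m ≤ i}

namespace Q0

noncomputable instance : LinearOrder Q0 :=
  inferInstanceAs (LinearOrder {x : Lex (ℕ → Fin 3) // ∃ m, ∀ i, ofLex x i = 1 ↔ m ≤ i})

/-- The position of the first `1`. -/
noncomputable def len (c : Q0) : ℕ := c.2.choose

/-- The underlying ternary sequence. -/
def seq (c : Q0) : ℕ → Fin 3 := ofLex c.1

theorem seq_eq (c : Q0) (i : ℕ) : c.seq i = 1 ↔ c.len ≤ i := c.2.choose_spec i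

theorem ext' {c c' : Q0} (h : ∀ i, c.seq i = c'.seq i) : c = c' :=
  Subtype.ext (ofLex.injective (funext h))

theorem lt_iff {c c' : Q0} : c < c' ↔ ∃ i, (∀ j < i, c.seq j = c'.seq j) ∧ c.seq i < c'.seq i :=
  Iff.rfl

/-- The element `x 0 ⋯ x (m - 1) 1 1 1 ⋯` of `Q0`. -/
def mk (x : ℕ → Fin 3) (m : ℕ) (hx : ∀ i < m, x i ≠ 1) : Q0 :=
  ⟨toLex fun i => if i < m then x i else 1, m, fun i => by
    by_cases h : i < m
    · simp [h, hx i h]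
    · simp [h]; omega⟩

theorem mk_seq (x : ℕ → Fin 3) (m : ℕ) (hx : ∀ i < m, x i ≠ 1) (i : ℕ) :
    (mk x m hx).seq i = if i < m then x i else 1 := rfl

theorem mk_len (x : ℕ → Fin 3) (m : ℕ) (hx : ∀ i < m, x i ≠ 1) : (mk x m hx).len = m := by
  have h := fun i => (mk x m hx).seq_eq i
  simp only [mk_seq] at h
  have h1 := (h m).1 (by simp)
  by_contra hne
  have h2 := (h (mk x m hx).len).2 le_rfl
  rw [if_pos (by omega)] at h2
  exact hx _ (by omega) h2

theorem eq_mk (c : Q0) : mk c.seq c.len (fun i hi h => absurd ((c.seq_eq i).1 h) (by omega)) = c :=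
  ext' fun i => by
    rw [mk_seq]
    split_ifs with h
    · rfl
    · exact ((c.seq_eq i).2 (by omega)).symm

instance : Countable Q0 := by
  have : Function.Injective fun c : Q0 => (⟨c.len, fun i => c.seq i⟩ : Σ n : ℕ, Fin n → Fin 3) := by
    intro c c' h
    simp only [Sigma.mk.injEq] at h
    obtain ⟨h1, h2⟩ := h
    refine ext' fun i => ?_
    by_cases hi : i < c.len
    · have h3 : ∀ n n' (f : Fin n → Fin 3) (f' : Fin n' → Fin 3), n = n' → HEq f f' →
          ∀ i (h : i < n) (h' : i < n'), f ⟨i, h⟩ = f' ⟨i, h'⟩ := by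
        rintro n _ f _ rfl h i _ _
        rw [eq_of_heq h]
      exact h3 _ _ _ _ h1 h2 i hi (h1 ▸ hi)
    · rw [(c.seq_eq i).2 (by omega), (c'.seq_eq i).2 (by omega)]
  exact this.countable

instance : Nontrivial Q0 := by
  refine ⟨mk (fun _ => 0) 0 (by simp), mk (fun _ => 0) 1 (by simp), fun h => ?_⟩
  have := congrArg (fun c => c.seq 0) h
  simp [mk_seq] at this

instance : DenselyOrdered Q0 := by
  refine ⟨fun a b hab => ?_⟩
  obtain ⟨d, hd, hlt⟩ := lt_iff.1 hab
  have hne : ∀ c : Q0, ∀ i, c.seq i ≠ 1 ↔ i < c.len := fun c i => by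
    rw [Ne, seq_eq]; omega
  by_cases ha : a.seq d = 1
  · -- `b` continues to the right of `a`; go left below `b`
    have hb : b.seq d ≠ 1 := by
      rw [ha] at hlt
      exact hlt.ne'
    have hb' := (hne _ _).1 hb
    have hl : ∀ i < b.len, (if i < b.len then b.seq i else 0) ≠ 1 := by
      intro i hi
      rw [if_pos hi]
      exact (hne _ _).2 hi
    refine ⟨mk (fun i => if i < b.len then b.seq i else 0) (b.len + 1) ?_, ?_, ?_⟩
    · intro i hi
      split_ifs with h
      · exact (hne _ _).2 h
      · simp
    · refine lt_iff.2 ⟨d, fun j hj => ?_, ?_⟩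
      · rw [mk_seq, if_pos (by omega), if_pos (by omega)]
        exact hd j hj
      · rw [mk_seq, if_pos (by omega), if_pos (by omega)]
        exact hlt
    · refine lt_iff.2 ⟨b.len, fun j hj => ?_, ?_⟩
      · rw [mk_seq, if_pos (by omega), if_pos (by omega)]
      · rw [mk_seq, if_pos (by omega), if_neg (by omega), (b.seq_eq _).2 le_rfl]
        decide
  · have ha' := (hne _ _).1 ha
    refine ⟨mk (fun i => if i < a.len then a.seq i else 2) (a.len + 1) ?_, ?_, ?_⟩
    · intro i hi
      split_ifs with h
      · exact (hne _ _).2 h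
      · decide
    · refine lt_iff.2 ⟨a.len, fun j hj => ?_, ?_⟩
      · rw [mk_seq, if_pos (by omega), if_pos (by omega)]
      · rw [mk_seq, if_pos (by omega), if_neg (by omega), (a.seq_eq _).2 le_rfl]
        decide
    · refine lt_iff.2 ⟨d, fun j hj => ?_, ?_⟩
      · rw [mk_seq, if_pos (by omega), if_pos (by omega)]
        exact hd j hj
      · rw [mk_seq, if_pos (by omega), if_pos (by omega)]
        exact hlt

/-- The chain `Q0` is codable: a word codes `c` if it agrees with `c` up to and including the first
`1`. A rigid surjection preserves the lexicographic order because the first difference of two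
sequences, in position `d`, is moved to position `Φ.f d`. -/
theorem cod : Cod Q0 := by
  refine ⟨Fin 3, inferInstance, inferInstance, fun x m c => c.len < m ∧ x c.len = 1 ∧
    ∀ i < c.len, x i = c.seq i, fun c => ?_, fun x x' m m' c => ?_,
    fun x m c c' => ?_, fun Φ => ?_⟩
  · exact ⟨c.seq, c.len + 1, by omega, (c.seq_eq _).2 le_rfl, fun _ _ => rfl⟩
  · rintro ⟨h1, h2, h3⟩ hm hx
    exact ⟨by omega, by rw [← hx _ h1, h2], fun i hi => by rw [← hx i (by omega), h3 i hi]⟩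
  · rintro ⟨h1, h2, h3⟩ ⟨h1', h2', h3'⟩
    have hl : c.len = c'.len := by
      rcases lt_trichotomy c.len c'.len with h | h | h
      · have := (c'.seq_eq _).1 ((h3' _ h).symm.trans h2)
        omega
      · exact h
      · have := (c.seq_eq _).1 ((h3 _ h).symm.trans h2')
        omega
    refine ext' fun i => ?_
    by_cases hi : i < c.len
    · rw [← h3 i hi, ← h3' i (by omega)]
    · rw [(c.seq_eq i).2 (by omega), (c'.seq_eq i).2 (by omega)]
  · have hne : ∀ c : Q0, ∀ i < Φ.f c.len, (c.seq ∘ Φ.φ) i ≠ 1 := fun c i hi h => by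
      have h1 := (c.seq_eq _).1 h
      have h2 := Φ.φ_lt _ _ hi
      omega
    refine ⟨OrderEmbedding.ofStrictMono (fun c => mk (c.seq ∘ Φ.φ) (Φ.f c.len) (hne c)) ?_, ?_⟩
    · intro a b hab
      obtain ⟨d, hd, hlt⟩ := lt_iff.1 hab
      have hda : d ≤ a.len := by
        by_contra! h
        have h1 := (a.seq_eq _).2 le_rfl
        have h2 := (b.seq_eq _).1 ((hd _ h).symm.trans h1)
        rw [(a.seq_eq d).2 (by omega), (b.seq_eq d).2 (by omega)] at hlt
        exact lt_irrefl _ hlt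
      have hdb : d ≤ b.len := by
        by_contra! h
        have h1 := (b.seq_eq _).2 le_rfl
        have h2 := (a.seq_eq _).1 ((hd _ h).trans h1)
        omega
      have hf : ∀ c : Q0, d ≤ c.len →
          (mk (c.seq ∘ Φ.φ) (Φ.f c.len) (hne c)).seq (Φ.f d) = c.seq d := by
        intro c hc
        rw [mk_seq]
        split_ifs with h
        · simp [Φ.φ_f]
        · have := Φ.f_strictMono.lt_iff_lt.not.1 h
          exact ((c.seq_eq d).2 (by omega)).symm
      refine lt_iff.2 ⟨Φ.f d, fun j hj => ?_, ?_⟩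
      · have h1 := Φ.f_strictMono.monotone hda
        have h2 := Φ.f_strictMono.monotone hdb
        rw [mk_seq, mk_seq, if_pos (by omega), if_pos (by omega)]
        exact hd _ (Φ.φ_lt _ _ hj)
      · rw [hf a hda, hf b hdb]
        exact hlt
    · rintro x m c ⟨h1, h2, h3⟩
      change (mk _ _ (hne c)).len < _ ∧ (x ∘ Φ.φ) (mk _ _ (hne c)).len = 1 ∧
        ∀ i < (mk _ _ (hne c)).len, (x ∘ Φ.φ) i = (mk _ _ (hne c)).seq i
      rw [mk_len]
      refine ⟨Φ.f_strictMono h1, ?_, fun i hi => ?_⟩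
      · simp [Φ.φ_f, h2]
      · rw [mk_seq, if_pos hi]
        exact h3 _ (Φ.φ_lt _ _ hi)

end Q0

/-- A countable non-scattered chain is biembeddable with `Q0`. -/
theorem bigRamsey_of_not_scattered (C : Type u) [LinearOrder C] [Countable C] (h : ¬ Scattered C)
    (n : ℕ) : ∃ t, BigRamseyDegLE (Fin n) C t := by
  obtain ⟨t, ht⟩ := Q0.cod.bigRamseyDegLE n
  obtain ⟨e⟩ : Nonempty (ℚ ↪o C) := not_isEmpty_iff.1 h
  obtain ⟨e₁⟩ := Order.embedding_from_countable_to_dense (α := C) (β := Q0)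
  obtain ⟨e₂⟩ := Order.embedding_from_countable_to_dense (α := Q0) (β := ℚ)
  exact ⟨t, ht.of_biembed (e₂.trans e) e₁⟩

/-! ### Biembeddability and finite sums -/

namespace Biembeddable

theorem refl (A : Type*) [LinearOrder A] : Biembeddable A A :=
  ⟨⟨RelEmbedding.refl _⟩, ⟨RelEmbedding.refl _⟩⟩

theorem symm {A B : Type*} [LinearOrder A] [LinearOrder B] (h : Biembeddable A B) :
    Biembeddable B A := ⟨h.2, h.1⟩

theorem trans {A B C : Type*} [LinearOrder A] [LinearOrder B] [LinearOrder C]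
    (h : Biembeddable A B) (h' : Biembeddable B C) : Biembeddable A C :=
  ⟨⟨h.1.some.trans h'.1.some⟩, ⟨h'.2.some.trans h.2.some⟩⟩

theorem of_iso {A B : Type*} [LinearOrder A] [LinearOrder B] (e : A ≃o B) : Biembeddable A B :=
  ⟨⟨e.toOrderEmbedding⟩, ⟨e.symm.toOrderEmbedding⟩⟩

theorem dual {A B : Type*} [LinearOrder A] [LinearOrder B] (h : Biembeddable A B) :
    Biembeddable Aᵒᵈ Bᵒᵈ := ⟨⟨h.1.some.dual⟩, ⟨h.2.some.dual⟩⟩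

theorem sum {A B A' B' : Type*} [LinearOrder A] [LinearOrder B] [LinearOrder A'] [LinearOrder B']
    (h : Biembeddable A A') (h' : Biembeddable B B') : Biembeddable (A ⊕ₗ B) (A' ⊕ₗ B') :=
  ⟨⟨(sumLex_map h.1.some h'.1.some).choose⟩, ⟨(sumLex_map h.2.some h'.2.some).choose⟩⟩

/-- A chain is the sum of an initial segment and the complementary final segment. -/
theorem of_cut {C : Type*} [LinearOrder C] (p q : C → Prop) (h : ∀ x, p x ∨ q x)
    (hlt : ∀ x y, p x → q y → x < y) : Biembeddable C ({x // p x} ⊕ₗ {x // q x}) := by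
  classical
  refine ⟨⟨OrderEmbedding.ofStrictMono (fun x => if hx : p x then Sum.inlₗ ⟨x, hx⟩ else
    Sum.inrₗ ⟨x, (h x).resolve_left hx⟩) ?_⟩, ⟨(sumLex_embedding (D := C)
    (OrderEmbedding.subtype p) (OrderEmbedding.subtype q) fun a b => hlt a b a.2 b.2).choose⟩⟩
  intro x y hxy
  by_cases hx : p x <;> by_cases hy : p y <;> simp only [hx, hy, dif_pos, dif_neg, not_false_eq_true]
  · exact Sum.Lex.inl_lt_inl_iff.2 hxy
  · exact Sum.Lex.inl_lt_inr _ _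
  · exact absurd (hlt y x hy ((h x).resolve_left hx)) hxy.not_gt
  · exact Sum.Lex.inr_lt_inr_iff.2 hxy

end Biembeddable

/-- The sum of a finite sequence of chains. -/
def sumL : List LinOrd.{0} → LinOrd.{0}
  | [] => LinOrd.of Empty
  | A :: l => LinOrd.of (A ⊕ₗ sumL l)

instance : IsEmpty (sumL []) := inferInstanceAs (IsEmpty Empty)

theorem biembeddable_of_isEmpty (A B : Type*) [LinearOrder A] [LinearOrder B] [IsEmpty A]
    [IsEmpty B] : Biembeddable A B :=
  ⟨⟨OrderEmbedding.ofIsEmpty⟩, ⟨OrderEmbedding.ofIsEmpty⟩⟩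

theorem sumL_append (l l' : List LinOrd.{0}) :
    Biembeddable (sumL (l ++ l')) (sumL l ⊕ₗ sumL l') := by
  induction l with
  | nil => exact .of_iso (OrderIso.emptySumLex (β := sumL []) (α := sumL l')).symm
  | cons A l ih =>
    exact ((Biembeddable.refl A).sum ih).trans
      (.of_iso (OrderIso.sumLexAssoc A (sumL l) (sumL l')).symm)

theorem embedding_sumL_of_mem {A : LinOrd.{0}} {l : List LinOrd.{0}} (h : A ∈ l) :
    Nonempty (A ↪o sumL l) := by
  induction l with
  | nil => simp at h
  | cons B l ih =>
    rcases List.mem_cons.1 h with rfl | h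
    · exact ⟨OrderEmbedding.ofStrictMono Sum.inlₗ fun _ _ h => Sum.Lex.inl_lt_inl_iff.2 h⟩
    · exact ⟨(ih h).some.trans
        (OrderEmbedding.ofStrictMono Sum.inrₗ fun _ _ h => Sum.Lex.inr_lt_inr_iff.2 h)⟩

theorem sumL_singleton (A : LinOrd.{0}) : Biembeddable (sumL [A]) A :=
  .of_iso (OrderIso.sumLexEmpty (α := A) (β := sumL []))

/-- The reversed chain. -/
def dualL (A : LinOrd.{0}) : LinOrd.{0} := LinOrd.of Aᵒᵈ

theorem sumL_dual (l : List LinOrd.{0}) :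
    Biembeddable (sumL l)ᵒᵈ (sumL (l.map dualL).reverse) := by
  induction l with
  | nil =>
    have : IsEmpty (sumL [])ᵒᵈ := inferInstanceAs (IsEmpty Empty)
    exact biembeddable_of_isEmpty _ (sumL [])
  | cons A l ih =>
    rw [List.map_cons, List.reverse_cons]
    refine .trans (.of_iso (OrderIso.sumLexDualAntidistrib A (sumL l))) ?_
    exact (ih.sum (sumL_singleton (dualL A)).symm).trans (sumL_append _ _).symm

theorem Cod.sumL {l : List LinOrd.{0}} (h : ∀ A ∈ l, Cod A) : Cod (sumL l) := by
  induction l with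
  | nil =>
    have : Subsingleton (_root_.sumL []) := inferInstanceAs (Subsingleton Empty)
    exact Cod.of_subsingleton _
  | cons A l ih =>
    exact (h A (by simp)).sum (ih fun B hB => h B (by simp [hB]))

/-! ### Chains of finite Hausdorff rank as finite sums of codable chains -/

/-- `C` is biembeddable with a finite sum of (possibly repeated) members of the list `I`. -/
def SumRep (I : List LinOrd.{0}) (C : Type u) [LinearOrder C] : Prop :=
  ∃ l ⊆ I, Biembeddable C (sumL l)

namespace SumRep

theorem mono {I J : List LinOrd.{0}} {C : Type u} [LinearOrder C] (h : SumRep I C) (hIJ : I ⊆ J) :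
    SumRep J C := h.imp fun _ hl => ⟨List.Subset.trans hl.1 hIJ, hl.2⟩

theorem of_biembeddable {I : List LinOrd.{0}} {C : Type u} {D : Type v} [LinearOrder C]
    [LinearOrder D] (h : SumRep I C) (e : Biembeddable D C) : SumRep I D :=
  h.imp fun _ hl => ⟨hl.1, e.trans hl.2⟩

theorem sum {I : List LinOrd.{0}} {C : Type u} {D : Type v} [LinearOrder C]
    [LinearOrder D] (h : SumRep I C) (h' : SumRep I D) : SumRep I (C ⊕ₗ D) := by
  obtain ⟨l, hl, e⟩ := h
  obtain ⟨l', hl', e'⟩ := h'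
  exact ⟨l ++ l', List.append_subset.2 ⟨hl, hl'⟩, (e.sum e').trans (sumL_append _ _).symm⟩

theorem dual {I : List LinOrd.{0}} {C : Type u} [LinearOrder C] (h : SumRep I C) :
    SumRep (I.map dualL) Cᵒᵈ := by
  obtain ⟨l, hl, e⟩ := h
  exact ⟨(l.map dualL).reverse, List.reverse_subset.2 (List.map_subset _ hl),
    e.dual.trans (sumL_dual l)⟩

end SumRep

/-- For a chain `D` cut into an `ω`-sequence of intervals by `d : D → ℕ`: the chain `Y` embeds into
finitely many consecutive intervals, arbitrarily far out. -/
def Big {D : Type v} [LinearOrder D] (d : D → ℕ) (Y : Type u) [LinearOrder Y] : Prop :=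
  ∀ M, ∃ M', Nonempty (Y ↪o {x : D // M ≤ d x ∧ d x < M'})

namespace Big

variable {D : Type v} [LinearOrder D] {d : D → ℕ}

theorem of_embedding {Y Z : Type*} [LinearOrder Y] [LinearOrder Z] (h : Big d Y)
    (e : Nonempty (Z ↪o Y)) : Big d Z := fun M =>
  (h M).imp fun _ ⟨f⟩ => ⟨e.some.trans f⟩

theorem of_isEmpty (Y : Type*) [LinearOrder Y] [IsEmpty Y] : Big d Y := fun M =>
  ⟨M, ⟨OrderEmbedding.ofIsEmpty⟩⟩

theorem sum (hd : Monotone d) {Y Z : Type*} [LinearOrder Y] [LinearOrder Z] (hY : Big d Y)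
    (hZ : Big d Z) : Big d (Y ⊕ₗ Z) := by
  intro M
  obtain ⟨M₁, ⟨f⟩⟩ := hY M
  obtain ⟨M₂, ⟨g⟩⟩ := hZ (max M M₁)
  obtain ⟨w, -⟩ := sumLex_embedding (D := {x : D // M ≤ d x ∧ d x < max M₁ M₂})
    (OrderEmbedding.ofStrictMono (fun y => ⟨(f y).1, (f y).2.1, (f y).2.2.trans_le (le_max_left _ _)⟩)
      fun _ _ h => f.strictMono h)
    (OrderEmbedding.ofStrictMono (fun z => ⟨(g z).1, (le_max_left _ _).trans (g z).2.1,
        (g z).2.2.trans_le (le_max_right _ _)⟩)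
      fun _ _ h => g.strictMono h)
    (fun a b => by
      refine hd.reflect_lt (((f a).2.2.trans_le (le_max_right M _)).trans_le (g b).2.1))
  exact ⟨_, ⟨w⟩⟩

theorem sumL (hd : Monotone d) {l : List LinOrd.{0}} (h : ∀ A ∈ l, Big d A) :
    Big d (sumL l) := by
  induction l with
  | nil => exact of_isEmpty _
  | cons A l ih =>
    exact (h A (by simp)).sum hd (ih fun B hB => h B (by simp [hB]))

/-- If every interval of `E` embeds into `D` arbitrarily far out, then `E` embeds into `D`: place the
intervals one after the other. -/
theorem embedding (hd : Monotone d) {E : Type u} [LinearOrder E] {e : E → ℕ} (he : Monotone e)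
    (h : ∀ j, Big d {x : E // e x = j}) : Nonempty (E ↪o D) := by
  choose g w using h
  replace w := fun j M => (w j M).some
  let m : ℕ → ℕ := fun j => j.rec 0 fun j M => max M (g j M)
  have hm : Monotone m := monotone_nat_of_le_succ fun j => le_max_left _ _
  refine ⟨OrderEmbedding.ofStrictMono (fun x => (w (e x) (m (e x)) ⟨x, rfl⟩).1) ?_⟩
  intro x y hxy
  rcases (he hxy.le).lt_or_eq with h | h
  · refine hd.reflect_lt ?_
    calc d _ < g (e x) (m (e x)) := (w _ _ _).2.2
      _ ≤ m (e x + 1) := le_max_right _ _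
      _ ≤ m (e y) := hm h
      _ ≤ _ := (w _ _ _).2.1
  · have : ∀ j (hj : e y = j), (w (e y) (m (e y)) ⟨y, rfl⟩).1 = (w j (m j) ⟨y, hj⟩).1 := by
      rintro _ rfl
      rfl
    dsimp only
    rw [this _ h.symm]
    exact (w (e x) (m (e x))).strictMono (show (⟨x, rfl⟩ : {z // e z = e x}) < ⟨y, h.symm⟩ from hxy)

end Big

/-- The members of `I` together with the sums of `ω` copies of `S₀ + ⋯ + Sₖ`, for the sublists `S` of
`I`. -/
def omegaL (I : List LinOrd.{0}) : List LinOrd.{0} :=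
  I ++ I.sublists.map fun S => LinOrd.of (ℕ ×ₗ sumL S)

/-- An `ω`-indexed sum of chains represented over `I` is represented over `omegaL I`. Let `S` consist of
the members of `I` which occur in the representations of infinitely many summands. Past some `N` only
members of `S` occur, and `Big.embedding` in both directions shows that the sum of the summands from
`N` on is biembeddable with the sum of `ω` copies of the sum of `S`. -/
theorem SumRep.omega {I : List LinOrd.{0}} {C : Type u} [LinearOrder C] (c : C → ℕ)
    (hc : Monotone c)
    (h : ∀ i, SumRep I {x // c x = i}) : SumRep (omegaL I) C := by
  classical
  have hlow : ∀ N, SumRep I {x // c x < N} := by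
    intro N
    induction N with
    | zero =>
      have : IsEmpty {x // c x < 0} := ⟨fun x => Nat.not_lt_zero _ x.2⟩
      exact ⟨[], by simp, biembeddable_of_isEmpty _ _⟩
    | succ N ih =>
      refine (ih.sum (h N)).of_biembeddable ((Biembeddable.of_cut (C := {x // c x < N + 1})
        (fun x => c x < N) (fun x => c x = N) (fun x => Nat.lt_succ_iff_lt_or_eq.1 x.2)
        fun x y hx hy => hc.reflect_lt (hx.trans_eq hy.symm)).trans (.sum (.of_iso ?_) (.of_iso ?_)))
      · exact ⟨⟨fun x => ⟨x.1.1, x.2⟩, fun x => ⟨⟨x.1, x.2.trans N.lt_succ_self⟩, x.2⟩,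
          fun _ => rfl, fun _ => rfl⟩, Iff.rfl⟩
      · exact ⟨⟨fun x => ⟨x.1.1, x.2⟩, fun x => ⟨⟨x.1, x.2.trans_lt N.lt_succ_self⟩, x.2⟩,
          fun _ => rfl, fun _ => rfl⟩, Iff.rfl⟩
  choose l hl e using h
  let S := I.filter fun A => ∀ M, ∃ i ≥ M, A ∈ l i
  obtain ⟨N, hN⟩ : ∃ N, ∀ i ≥ N, l i ⊆ S := by
    have : ∀ A ∈ I, ∃ N, ∀ i ≥ N, A ∈ l i → A ∈ S := by
      intro A hA
      by_cases h : ∀ M, ∃ i ≥ M, A ∈ l i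
      · exact ⟨0, fun i _ _ => List.mem_filter.2 ⟨hA, by simpa using h⟩⟩
      · push Not at h
        obtain ⟨M, hM⟩ := h
        exact ⟨M, fun i hi h => absurd h (hM i hi)⟩
    have : ∀ J ⊆ I, ∃ N, ∀ A ∈ J, ∀ i ≥ N, A ∈ l i → A ∈ S := by
      intro J
      induction J with
      | nil => simp
      | cons A J ih =>
        intro hJ
        obtain ⟨N₁, h₁⟩ := ih (List.Subset.trans (List.subset_cons_self A J) hJ)
        obtain ⟨N₂, h₂⟩ := this A (hJ (by simp))
        refine ⟨max N₁ N₂, fun B hB i hi hBi => ?_⟩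
        rcases List.mem_cons.1 hB with rfl | hB
        · exact h₂ i ((le_max_right _ _).trans hi) hBi
        · exact h₁ B hB i ((le_max_left _ _).trans hi) hBi
    obtain ⟨N, hN⟩ := this I (List.Subset.refl _)
    exact ⟨N, fun i hi A hA => hN A (hl i hA) i hi hA⟩
  have hhigh : SumRep (omegaL I) {x // N ≤ c x} := by
    refine ⟨[LinOrd.of (ℕ ×ₗ sumL S)], ?_, .trans ?_ (sumL_singleton _).symm⟩
    · intro A hA
      rw [List.mem_singleton.1 hA]
      exact List.mem_append_right _ (List.mem_map_of_mem (List.mem_sublists.2 List.filter_sublist))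
    · have hmul : Monotone fun x : ℕ ×ₗ sumL S => (ofLex x).1 := fun x y h => by
        rcases Prod.Lex.le_iff.1 h with h | h
        · exact h.le
        · exact h.1.le
      have hC : Monotone fun x : {x // N ≤ c x} => c x := fun x y h => hc h
      constructor
      · refine Big.embedding hmul hC fun j => ?_
        by_cases hj : N ≤ j
        · refine (Big.sumL hmul fun A hA => ?_).of_embedding (Z := {x : {x // N ≤ c x} // c x = j})
            (Y := sumL (l j)) ?_
          · intro M
            obtain ⟨f⟩ := embedding_sumL_of_mem (hN j hj hA)
            exact ⟨M + 1, ⟨OrderEmbedding.ofStrictMono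
              (fun a => ⟨toLex (M, f a), le_rfl, M.lt_succ_self⟩) fun a b h =>
                Prod.Lex.toLex_lt_toLex.2 (Or.inr ⟨rfl, f.strictMono h⟩)⟩⟩
          · exact ⟨(OrderEmbedding.ofStrictMono (fun x => ⟨x.1.1, x.2⟩) fun _ _ h => h).trans
              (e j).1.some⟩
        · have : IsEmpty {x : {x // N ≤ c x} // c x = j} := ⟨fun x => hj (x.1.2.trans_eq x.2)⟩
          exact Big.of_isEmpty _
      · refine Big.embedding hC hmul fun j => ?_
        refine (Big.sumL hC fun A hA => ?_).of_embedding (Y := sumL S) ?_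
        · intro M
          have hA := (List.mem_filter.1 hA).2
          simp only [decide_eq_true_eq] at hA
          obtain ⟨i, hi, hAi⟩ := hA (max N M)
          obtain ⟨f⟩ := embedding_sumL_of_mem hAi
          obtain ⟨g⟩ := (e i).2
          have h1 : ∀ a, c (g a) = i := fun a => (g a).2
          refine ⟨i + 1, ⟨OrderEmbedding.ofStrictMono (fun a => ⟨⟨(g (f a)).1, ?_⟩, ?_, ?_⟩) ?_⟩⟩
          · rw [h1]; exact (le_max_left _ _).trans hi
          · dsimp only; rw [h1]; exact (le_max_right _ _).trans hi
          · dsimp only; rw [h1]; exact i.lt_succ_self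
          · intro a b h
            exact g.strictMono (f.strictMono h)
        · refine ⟨OrderEmbedding.ofStrictMono (fun x => (ofLex x.1).2) fun x y h => ?_⟩
          rcases Prod.Lex.lt_iff.1 (show x.1 < y.1 from h) with h | h
          · exact absurd (x.2.trans y.2.symm) h.ne
          · exact h.2
  refine (((hlow N).mono (List.subset_append_left _ _)).sum hhigh).of_biembeddable
    (.of_cut _ _ (fun x => lt_or_ge _ _) fun x y hx hy => hc.reflect_lt (hx.trans_le hy))

/-- The closure of `I` needed to represent `ℤ`-indexed sums of chains represented over `I`. -/
def nextL (I : List LinOrd.{0}) : List LinOrd.{0} :=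
  (omegaL (I.map dualL)).map dualL ++ omegaL I

/-- The case of `ℤ`-indexed sums: the negative part is the reverse of an `ω`-indexed sum. -/
theorem SumRep.zsum {I : List LinOrd.{0}} {C : Type u} [LinearOrder C] (c : C → ℤ)
    (hc : Monotone c)
    (h : ∀ i, SumRep I {x // c x = i}) : SumRep (nextL I) C := by
  refine SumRep.of_biembeddable (SumRep.sum ?_ ?_) (.of_cut (fun x => c x < 0) (fun x => 0 ≤ c x)
    (fun x => lt_or_ge _ _) fun x y hx hy => hc.reflect_lt (hx.trans_le hy))
  · have hr : SumRep (omegaL (I.map dualL)) {x // c x < 0}ᵒᵈ := by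
      refine SumRep.omega (fun x => (-1 - c (OrderDual.ofDual x).1).toNat) ?_ fun i => ?_
      · intro x y hxy
        have : c (OrderDual.ofDual y).1 ≤ c (OrderDual.ofDual x).1 := hc hxy
        dsimp only
        omega
      · refine (h (-1 - i)).dual.of_biembeddable (.of_iso ⟨⟨
          fun x => OrderDual.toDual ⟨(OrderDual.ofDual x.1).1, ?_⟩,
          fun x => ⟨OrderDual.toDual ⟨(OrderDual.ofDual x).1, ?_⟩, ?_⟩,
          fun _ => rfl, fun _ => rfl⟩, Iff.rfl⟩)
        · have h1 := x.2
          have h2 := (OrderDual.ofDual x.1).2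
          omega
        · have := (OrderDual.ofDual x).2
          omega
        · have := (OrderDual.ofDual x).2
          simp only [OrderDual.ofDual_toDual]
          omega
    exact hr.dual.mono (List.subset_append_left _ _)
  · refine SumRep.mono ?_ (List.subset_append_right _ _)
    refine SumRep.omega (fun x => (c x.1).toNat) (fun x y h => Int.toNat_le_toNat (hc h)) fun i => ?_
    refine (h i).of_biembeddable (.of_iso ⟨⟨
          fun x => ⟨x.1.1, ?_⟩, fun x => ⟨⟨x.1, ?_⟩, ?_⟩, fun _ => rfl, fun _ => rfl⟩, Iff.rfl⟩)
    · have h1 := x.2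
      have h2 := x.1.2
      omega
    · have := x.2
      omega
    · have := x.2
      dsimp only
      omega

theorem Cod.omegaL {I : List LinOrd.{0}} (h : ∀ A ∈ I, Cod A) : ∀ A ∈ omegaL I, Cod A := by
  intro A hA
  rcases List.mem_append.1 hA with hA | hA
  · exact h A hA
  · obtain ⟨S, hS, rfl⟩ := List.mem_map.1 hA
    exact (Cod.sumL fun B hB => h B ((List.mem_sublists.1 hS).subset hB)).omega

theorem Cod.dualL {I : List LinOrd.{0}} (h : ∀ A ∈ I, Cod A) : ∀ A ∈ I.map dualL, Cod A := by
  intro A hA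
  obtain ⟨B, hB, rfl⟩ := List.mem_map.1 hA
  exact (h B hB).dual

/-- The chains of Hausdorff rank at most `n` are represented over a single finite list of codable
chains. -/
theorem exists_rep (n : ℕ) : ∃ I : List LinOrd.{0}, (∀ A ∈ I, Cod A) ∧
    ∀ m ≤ n, ∀ (C : Type u) [LinearOrder C], InHausdorff m C → SumRep I C := by
  induction n with
  | zero =>
    refine ⟨[LinOrd.of Unit], fun A hA => ?_, fun m hm C _ h => ?_⟩
    · rw [List.mem_singleton.1 hA]
      exact Cod.of_subsingleton Unit
    · obtain rfl : m = 0 := by omega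
      rw [InHausdorff] at h
      rcases isEmpty_or_nonempty C with hC | ⟨⟨x⟩⟩
      · exact ⟨[], by simp, biembeddable_of_isEmpty _ _⟩
      · refine ⟨_, List.Subset.refl _, .trans ?_ (sumL_singleton _).symm⟩
        exact ⟨⟨OrderEmbedding.ofStrictMono (fun _ => ()) fun a b h =>
          absurd (Subsingleton.elim a b) h.ne⟩, ⟨OrderEmbedding.ofStrictMono (fun _ => x)
          fun a b h => absurd (Subsingleton.elim (α := Unit) a b) h.ne⟩⟩
  | succ n ih =>
    obtain ⟨I, hI, hrep⟩ := ih
    refine ⟨I ++ nextL I, ?_, fun m hm C _ h => ?_⟩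
    · intro A hA
      rcases List.mem_append.1 hA with hA | hA
      · exact hI A hA
      · rcases List.mem_append.1 hA with hA | hA
        · exact Cod.dualL (Cod.omegaL (Cod.dualL hI)) A hA
        · exact Cod.omegaL hI A hA
    · rcases Nat.lt_or_eq_of_le hm with hm | rfl
      · exact (hrep m (by omega) C h).mono (List.subset_append_left _ _)
      · rw [InHausdorff] at h
        obtain ⟨c, hc, h⟩ := h
        refine (SumRep.zsum c hc fun i => ?_).mono (List.subset_append_right _ _)
        obtain ⟨k, hk, h⟩ := h i
        exact hrep k hk _ h

theorem bigRamsey_of_finiteHausdorffRank (C : Type u) [LinearOrder C]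
    (h : FiniteHausdorffRank C) (n : ℕ) : ∃ t, BigRamseyDegLE (Fin n) C t := by
  obtain ⟨r, hr⟩ := h
  obtain ⟨I, hI, hrep⟩ := exists_rep.{u} r
  obtain ⟨l, hl, e⟩ := hrep r le_rfl C hr
  obtain ⟨t, ht⟩ := (Cod.sumL fun A hA => hI A (hl hA)).bigRamseyDegLE n
  exact ⟨t, ht.of_biembed e.2.some e.1.some⟩

/-! ### Hausdorff's theorem -/

section Hausdorff

variable {C : Type u} [LinearOrder C]

/-- The sets obtained from the sets with at most one element by iterating `ℤ`-indexed sums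
(transfinitely): the union of all levels of the Hausdorff hierarchy, for subsets of `C`. -/
inductive IsKSum : Set C → Prop
  | subsingleton (S : Set C) (h : S.Subsingleton) : IsKSum S
  | zsum (S : Set C) (c : C → ℤ) (hc : MonotoneOn c S) (h : ∀ i, IsKSum {x ∈ S | c x = i}) :
      IsKSum S

namespace IsKSum

theorem mono {S T : Set C} (h : IsKSum S) (hT : T ⊆ S) : IsKSum T := by
  induction h generalizing T with
  | subsingleton S h => exact .subsingleton _ (h.anti hT)
  | zsum S c hc _ ih =>
    exact .zsum T c (hc.mono hT) fun i => ih i fun x hx => ⟨hT hx.1, hx.2⟩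

theorem cut {S : Set C} (p : C → Prop) (hp : ∀ x ∈ S, ∀ y ∈ S, x ≤ y → p y → p x)
    (h₁ : IsKSum {x ∈ S | p x}) (h₂ : IsKSum {x ∈ S | ¬ p x}) : IsKSum S := by
  classical
  refine .zsum S (fun x => if p x then 0 else 1) (fun x hx y hy hxy => ?_) fun i => ?_
  · dsimp only
    split_ifs with h h' h'
    · exact le_rfl
    · decide
    · exact absurd (hp x hx y hy hxy h') h
    · exact le_rfl
  · by_cases hi : i = 0
    · refine h₁.mono fun x hx => ⟨hx.1, ?_⟩
      by_contra h
      have := hx.2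
      rw [if_neg h] at this
      omega
    · refine h₂.mono fun x hx => ⟨hx.1, fun h => ?_⟩
      have := hx.2
      rw [if_pos h] at this
      omega

/-- If all intervals `[x, t]` with `t ∈ S` are iterated sums, then so is `S`, being a countable union of
increasing intervals. -/
theorem of_Icc_right {S : Set C} (hS : S.Countable) (x : C)
    (h : ∀ t ∈ S, x ≤ t ∧ IsKSum (Set.Icc x t)) : IsKSum S := by
  classical
  rcases S.eq_empty_or_nonempty with rfl | hne
  · exact .subsingleton _ Set.subsingleton_empty
  obtain ⟨e, rfl⟩ := hS.exists_eq_range hne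
  have hex : ∀ t : C, t ∈ Set.range e → ∃ n, t ≤ e n := by
    rintro _ ⟨n, rfl⟩
    exact ⟨n, le_rfl⟩
  refine .zsum _ (fun t => if ht : ∃ n, t ≤ e n then (Nat.find ht : ℤ) else 0) ?_ fun i => ?_
  · intro s hs t ht hst
    dsimp only
    rw [dif_pos (hex s hs), dif_pos (hex t ht)]
    exact_mod_cast Nat.find_min' _ (hst.trans (Nat.find_spec (hex t ht)))
  · refine (h (e i.toNat) ⟨_, rfl⟩).2.mono ?_
    rintro t ⟨ht, hi⟩
    rw [dif_pos (hex t ht)] at hi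
    refine ⟨(h t ht).1, ?_⟩
    have : i.toNat = Nat.find (hex t ht) := by omega
    rw [this]
    exact Nat.find_spec (hex t ht)

theorem of_Icc_left {S : Set C} (hS : S.Countable) (x : C)
    (h : ∀ t ∈ S, t ≤ x ∧ IsKSum (Set.Icc t x)) : IsKSum S := by
  classical
  rcases S.eq_empty_or_nonempty with rfl | hne
  · exact .subsingleton _ Set.subsingleton_empty
  obtain ⟨e, rfl⟩ := hS.exists_eq_range hne
  have hex : ∀ t : C, t ∈ Set.range e → ∃ n, e n ≤ t := by
    rintro _ ⟨n, rfl⟩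
    exact ⟨n, le_rfl⟩
  refine .zsum _ (fun t => if ht : ∃ n, e n ≤ t then (-Nat.find ht : ℤ) else 0) ?_ fun i => ?_
  · intro s hs t ht hst
    dsimp only
    rw [dif_pos (hex s hs), dif_pos (hex t ht)]
    have : Nat.find (hex t ht) ≤ Nat.find (hex s hs) :=
      Nat.find_min' _ ((Nat.find_spec (hex s hs)).trans hst)
    omega
  · refine (h (e (-i).toNat) ⟨_, rfl⟩).2.mono ?_
    rintro t ⟨ht, hi⟩
    rw [dif_pos (hex t ht)] at hi
    refine ⟨?_, (h t ht).1⟩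
    have : (-i).toNat = Nat.find (hex t ht) := by omega
    rw [this]
    exact Nat.find_spec (hex t ht)

/-- Hausdorff's condensation: `x` and `y` are equivalent if the interval between them is an iterated
sum. -/
def setoid (C : Type u) [LinearOrder C] : Setoid C where
  r x y := IsKSum (Set.uIcc x y)
  iseqv :=
    { refl := fun x => .subsingleton _ (by simp)
      symm := fun {x y} h => by rwa [Set.uIcc_comm]
      trans := fun {x y z} h h' => by
        refine cut (· ≤ y) (fun a _ b _ hab hb => hab.trans hb) ?_ ?_
        · rcases le_total x z with hxz | hxz
          · refine h.mono fun u hu => ?_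
            rw [Set.uIcc_of_le hxz] at hu
            exact Set.mem_uIcc.2 (Or.inl ⟨hu.1.1, hu.2⟩)
          · refine h'.mono fun u hu => ?_
            rw [Set.uIcc_of_ge hxz] at hu
            exact Set.mem_uIcc.2 (Or.inr ⟨hu.1.1, hu.2⟩)
        · rcases le_total x z with hxz | hxz
          · refine h'.mono fun u hu => ?_
            rw [Set.uIcc_of_le hxz] at hu
            exact Set.mem_uIcc.2 (Or.inl ⟨(not_le.1 hu.2).le, hu.1.2⟩)
          · refine h.mono fun u hu => ?_
            rw [Set.uIcc_of_ge hxz] at hu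
            exact Set.mem_uIcc.2 (Or.inr ⟨(not_le.1 hu.2).le, hu.1.2⟩) }

theorem setoid_of_mem {x y z : C} (h : (setoid C).r x y) (hz : z ∈ Set.uIcc x y) :
    (setoid C).r x z :=
  IsKSum.mono h (Set.uIcc_subset_uIcc Set.left_mem_uIcc hz)

theorem of_setoid {S : Set C} (hS : S.Countable) (x : C) (h : ∀ t ∈ S, (setoid C).r x t) :
    IsKSum S := by
  refine cut (· ≤ x) (fun a _ b _ hab hb => hab.trans hb) ?_ ?_
  · refine of_Icc_left (hS.mono fun _ ht => ht.1) x fun t ht => ⟨ht.2, ?_⟩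
    have : IsKSum (Set.uIcc x t) := h t ht.1
    rwa [Set.uIcc_of_ge ht.2] at this
  · refine of_Icc_right (hS.mono fun _ ht => ht.1) x fun t ht => ⟨(not_le.1 ht.2).le, ?_⟩
    have : IsKSum (Set.uIcc x t) := h t ht.1
    rwa [Set.uIcc_of_le (not_le.1 ht.2).le] at this

/-- Hausdorff's theorem: a countable scattered chain is an iterated `ℤ`-sum. Representatives of the
classes of the condensation form a densely ordered subset, so there is only one class. -/
theorem of_scattered [Countable C] (h : Scattered C) : IsKSum (Set.univ : Set C) := by
  let r : C → C := fun x => (Quotient.mk (setoid C) x).out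
  have hr : ∀ x, (setoid C).r (r x) x := fun x => Quotient.mk_out (s := setoid C) x
  have hrr : ∀ x y, (setoid C).r x y → r x = r y := fun x y h => by
    have : Quotient.mk (setoid C) x = Quotient.mk (setoid C) y := Quotient.sound h
    simp only [r, this]
  have hdense : DenselyOrdered (Set.range r) := by
    refine ⟨?_⟩
    rintro ⟨_, a, rfl⟩ ⟨_, b, rfl⟩ hab
    have hab : r a < r b := hab
    by_contra! hno
    have hcl : ∀ t ∈ Set.Icc (r a) (r b), (setoid C).r (r a) t ∨ (setoid C).r (r b) t := by
      intro t ht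
      by_contra! hcon
      have h1 : r a < r t := by
        by_contra! hle
        refine hcon.1 ((setoid C).trans' ((setoid C).symm' (setoid_of_mem (hr t) ?_)) (hr t))
        exact Set.mem_uIcc.2 (Or.inl ⟨hle, ht.1⟩)
      have h2 : r t < r b := by
        by_contra! hle
        refine hcon.2 ((setoid C).trans' ((setoid C).symm' (setoid_of_mem (hr t) ?_)) (hr t))
        exact Set.mem_uIcc.2 (Or.inr ⟨ht.2, hle⟩)
      exact (hno ⟨r t, t, rfl⟩ h1).not_gt h2
    have hK : (setoid C).r (r a) (r b) := by
      change IsKSum (Set.uIcc _ _)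
      rw [Set.uIcc_of_le hab.le]
      refine cut (fun t => (setoid C).r (r a) t) (fun x hx y _ hxy hy => ?_)
        (of_setoid (Set.to_countable _) (r a) fun t ht => ht.2)
        (of_setoid (Set.to_countable _) (r b) fun t ht => (hcl t ht.1).resolve_left ht.2)
      exact setoid_of_mem hy (Set.mem_uIcc.2 (Or.inl ⟨hx.1, hxy⟩))
    have h1 := hrr _ _ (hr a)
    have h2 := hrr _ _ (hr b)
    have h3 := hrr _ _ hK
    rw [h1, h2] at h3
    exact hab.ne h3
  have hsub : Subsingleton (Set.range r) := by
    by_contra hn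
    rw [not_subsingleton_iff_nontrivial] at hn
    obtain ⟨e⟩ := Order.embedding_from_countable_to_dense (α := ℚ) (β := Set.range r)
    exact h.elim (e.trans (OrderEmbedding.subtype _))
  rcases isEmpty_or_nonempty C with hC | ⟨⟨x⟩⟩
  · exact .subsingleton _ (Set.subsingleton_of_subsingleton)
  · refine of_setoid (Set.to_countable _) x fun t _ => ?_
    have : r x = r t := congrArg Subtype.val
      (Subsingleton.elim (⟨r x, x, rfl⟩ : Set.range r) ⟨r t, t, rfl⟩)
    exact (setoid C).trans' ((setoid C).symm' (hr x)) (this ▸ hr t)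

end IsKSum

/-! ### Finite levels of the hierarchy for subsets -/

/-- The subset `D` of `C` belongs to the level `n` of the Hausdorff hierarchy. -/
def HS : ℕ → Set C → Prop
  | 0, D => D.Subsingleton
  | n + 1, D => ∃ c : C → ℤ, MonotoneOn c D ∧ ∀ i, HS n {x ∈ D | c x = i}

theorem HS.mono {n : ℕ} {D D' : Set C} (h : HS n D) (hD : D' ⊆ D) : HS n D' := by
  induction n generalizing D D' with
  | zero => exact Set.Subsingleton.anti h hD
  | succ n ih =>
    obtain ⟨c, hc, h⟩ := h
    exact ⟨c, hc.mono hD, fun i => ih (h i) fun x hx => ⟨hD hx.1, hx.2⟩⟩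

theorem HS.of_subsingleton (n : ℕ) {D : Set C} (h : D.Subsingleton) : HS n D := by
  induction n generalizing D with
  | zero => exact h
  | succ n ih =>
    exact ⟨fun _ => 0, fun _ _ _ _ _ => le_rfl, fun i => ih (h.anti fun x hx => hx.1)⟩

theorem HS.inHausdorff {n : ℕ} {D : Set C} (h : HS n D) {E : Type u} [LinearOrder E]
    (f : E ↪o C) (hf : ∀ x, f x ∈ D) : InHausdorff n E := by
  induction n generalizing D E with
  | zero =>
    rw [InHausdorff]
    exact ⟨fun a b => f.injective (h (hf a) (hf b))⟩
  | succ n ih =>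
    rw [InHausdorff]
    obtain ⟨c, hc, h⟩ := h
    exact ⟨fun x => c (f x), fun x y hxy => hc (hf x) (hf y) (f.monotone hxy), fun i =>
      ⟨n, le_rfl, ih (h i) ((OrderEmbedding.subtype _).trans f) fun x => ⟨hf x.1, x.2⟩⟩⟩

/-- `D` is a finite sum of sets of level `m`. -/
def FS (m : ℕ) (D : Set C) : Prop :=
  ∃ (c : C → ℤ) (k : ℤ), MonotoneOn c D ∧ (∀ x ∈ D, 0 ≤ c x ∧ c x < k) ∧
    ∀ i, HS m {x ∈ D | c x = i}

theorem FS.hs {m : ℕ} {D : Set C} (h : FS m D) : HS (m + 1) D := by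
  obtain ⟨c, k, hc, -, h⟩ := h
  exact ⟨c, hc, h⟩

theorem HS.fs {m : ℕ} {D : Set C} (h : HS m D) : FS m D :=
  ⟨fun _ => 0, 1, fun _ _ _ _ _ => le_rfl, by simp, fun i => h.mono fun x hx => hx.1⟩

theorem FS.cut {m : ℕ} {D : Set C} (p : C → Prop) (hp : ∀ x ∈ D, ∀ y ∈ D, x ≤ y → p y → p x)
    (h₁ : FS m {x ∈ D | p x}) (h₂ : FS m {x ∈ D | ¬ p x}) : FS m D := by
  classical
  obtain ⟨c₁, k₁, hc₁, hk₁, h₁⟩ := h₁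
  obtain ⟨c₂, k₂, hc₂, hk₂, h₂⟩ := h₂
  refine ⟨fun x => if p x then c₁ x else max 0 k₁ + c₂ x, max 0 k₁ + max 0 k₂,
    fun x hx y hy hxy => ?_, fun x hx => ?_, fun i => ?_⟩
  · dsimp only
    split_ifs with h h' h'
    · exact hc₁ ⟨hx, h⟩ ⟨hy, h'⟩ hxy
    · have := hk₁ x ⟨hx, h⟩
      have := hk₂ y ⟨hy, h'⟩
      omega
    · exact absurd (hp x hx y hy hxy h') h
    · have := hc₂ ⟨hx, h⟩ ⟨hy, h'⟩ hxy
      omega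
  · dsimp only
    split_ifs with h
    · have := hk₁ x ⟨hx, h⟩
      omega
    · have := hk₂ x ⟨hx, h⟩
      omega
  · by_cases hi : i < max 0 k₁
    · refine (h₁ i).mono ?_
      rintro x ⟨hx, hxi⟩
      dsimp only at hxi
      by_cases h : p x
      · rw [if_pos h] at hxi
        exact ⟨⟨hx, h⟩, hxi⟩
      · rw [if_neg h] at hxi
        have := hk₂ x ⟨hx, h⟩
        omega
    · refine (h₂ (i - max 0 k₁)).mono ?_
      rintro x ⟨hx, hxi⟩
      dsimp only at hxi
      by_cases h : p x
      · rw [if_pos h] at hxi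
        have := hk₁ x ⟨hx, h⟩
        omega
      · rw [if_neg h] at hxi
        exact ⟨⟨hx, h⟩, by omega⟩

end Hausdorff

/-! ### Labels and richness -/

section Labels

variable {C : Type u}

/-- `Rich P n D`, read `D` is `n`-rich, says that the labels `P x`, `x ∈ D`, branch `n` times.
For `n = 0` this means that `D` is nonempty; otherwise, that there is a set `F` such that,
for arbitrarily large `N`, there is a subset `D'` of `D` which is `(n - 1)`-rich, on which the labels
agree with `F` below `N`, and all of whose labels have a common element `p ≥ N`. -/
def Rich (P : C → Finset ℕ) : ℕ → Set C → Prop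
  | 0, D => D.Nonempty
  | n + 1, D => ∃ F : Finset ℕ, ∀ N, ∃ D' ⊆ D, Rich P n D' ∧
      (∀ x ∈ D', ∀ i < N, i ∈ P x ↔ i ∈ F) ∧ ∃ p ≥ N, ∀ x ∈ D', p ∈ P x

namespace Rich

theorem mono {P : C → Finset ℕ} {n : ℕ} {D D' : Set C} (h : Rich P n D) (hD : D ⊆ D') :
    Rich P n D' := by
  cases n with
  | zero => exact Set.Nonempty.mono hD h
  | succ n =>
    obtain ⟨F, hF⟩ := h
    refine ⟨F, fun N => ?_⟩
    obtain ⟨E, hE, h⟩ := hF N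
    exact ⟨E, hE.trans hD, h⟩

theorem of_succ {P : C → Finset ℕ} {n : ℕ} {D : Set C} (h : Rich P (n + 1) D) : Rich P n D := by
  induction n generalizing D with
  | zero =>
    obtain ⟨F, hF⟩ := h
    obtain ⟨E, hE, h, -⟩ := hF 0
    exact Set.Nonempty.mono hE h
  | succ n ih =>
    obtain ⟨F, hF⟩ := h
    refine ⟨F, fun N => ?_⟩
    obtain ⟨E, hE, h, h'⟩ := hF N
    exact ⟨E, hE, ih h, h'⟩

theorem nonempty {P : C → Finset ℕ} {n : ℕ} {D : Set C} (h : Rich P n D) : D.Nonempty := by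
  induction n with
  | zero => exact h
  | succ n ih => exact ih h.of_succ

/-- Richness is unaffected by shifting all labels and adding a common least element. -/
theorem shift {P Q : C → Finset ℕ} {n : ℕ} {D : Set C} (h : Rich Q n D) (a : ℕ)
    (hP : ∀ x ∈ D, P x = insert a ((Q x).image (· + (a + 1)))) : Rich P n D := by
  induction n generalizing D with
  | zero => exact h
  | succ n ih =>
    obtain ⟨F, hF⟩ := h
    refine ⟨insert a (F.image (· + (a + 1))), fun N => ?_⟩
    obtain ⟨E, hE, h, hN, p, hp, hpx⟩ := hF N
    refine ⟨E, hE, ih h fun x hx => hP x (hE hx), fun x hx i hi => ?_, p + (a + 1), by omega,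
      fun x hx => ?_⟩
    · rw [hP x (hE hx), Finset.mem_insert, Finset.mem_insert, Finset.mem_image, Finset.mem_image]
      refine or_congr_right (exists_congr fun j => and_congr_left fun hj => hN x hx j (by omega))
    · rw [hP x (hE hx)]
      exact Finset.mem_insert_of_mem (Finset.mem_image_of_mem _ (hpx x hx))

end Rich

/-- An iterated sum can be labelled by finite sets of numbers such that every subset which is not
`n`-rich is a finite sum of sets of level `2 * n`. The label of an element `x` lists the absolute
values of the indices of the summands containing `x` in the successive sums, each one shifted past the
preceding one. If `D` is not `(n + 1)`-rich, then only the summands with index of absolute value less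
than some `N` can be `n`-rich on `D`: these finitely many summands are handled by induction over the
formation of the sum, and the remaining ones by the case `n`. -/
theorem IsKSum.exists_rich [LinearOrder C] {S : Set C} (hS : IsKSum S) : ∃ P : C → Finset ℕ,
    ∀ n, ∀ D ⊆ S, ¬ Rich P n D → FS (2 * n) D := by
  classical
  induction hS with
  | subsingleton S h =>
    exact ⟨fun _ => ∅, fun n D hD _ => (HS.of_subsingleton _ (h.anti hD)).fs⟩
  | zsum S c hc _ ih =>
    choose Q hQ using ih
    let P : C → Finset ℕ := fun x =>
      insert (c x).natAbs ((Q (c x) x).image (· + ((c x).natAbs + 1)))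
    have hshift : ∀ n i, ∀ D ⊆ {x ∈ S | c x = i}, ¬ Rich P n D → FS (2 * n) D := by
      intro n i D hD h
      refine hQ i n D hD fun h' => h (h'.shift i.natAbs fun x hx => ?_)
      obtain ⟨-, rfl⟩ := hD hx
      rfl
    refine ⟨P, fun n D hD hn => ?_⟩
    cases n with
    | zero =>
      refine (HS.of_subsingleton _ ?_).fs
      rw [Set.not_nonempty_iff_eq_empty.1 hn]
      exact Set.subsingleton_empty
    | succ n =>
      have hfib : ∀ i, {x ∈ D | c x = i} ⊆ {x ∈ S | c x = i} := fun i x hx => ⟨hD hx.1, hx.2⟩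
      have h1 : ∀ i, FS (2 * (n + 1)) {x ∈ D | c x = i} := fun i =>
        hshift _ i _ (hfib i) fun h => hn (h.mono fun x hx => hx.1)
      -- otherwise `D` would be `(n + 1)`-rich with `F = ∅`
      obtain ⟨N, hN⟩ : ∃ N : ℕ, ∀ i : ℤ, N ≤ i.natAbs → ¬ Rich P n {x ∈ D | c x = i} := by
        by_contra! hcon
        refine hn ⟨∅, fun N => ?_⟩
        obtain ⟨i, hi, hr⟩ := hcon N
        refine ⟨_, fun x hx => hx.1, hr, fun x hx j hj => ?_, i.natAbs, hi, fun x hx => ?_⟩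
        · obtain ⟨-, rfl⟩ := hx
          simp only [P, Finset.mem_insert, Finset.mem_image, Finset.notMem_empty, iff_false]
          rintro (h | ⟨b, -, h⟩) <;> omega
        · obtain ⟨-, rfl⟩ := hx
          exact Finset.mem_insert_self _ _
      have hc' := hc.mono hD
      have h2 : ∀ E ⊆ D, (∀ x ∈ E, N ≤ (c x).natAbs) → FS (2 * (n + 1)) E := by
        intro E hE hEN
        refine HS.fs ⟨c, hc'.mono hE, fun i => ?_⟩
        by_cases hi : N ≤ i.natAbs
        · exact (hshift n i _ (hfib i) (hN i hi)).hs.mono fun x hx => ⟨hE hx.1, hx.2⟩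
        · refine HS.of_subsingleton _ ?_
          rintro x ⟨hx, rfl⟩
          exact absurd (hEN x hx) hi
      have h3 : ∀ j : ℕ, FS (2 * (n + 1)) {x ∈ D | c x < -N + j} := by
        intro j
        induction j with
        | zero => exact h2 _ (fun x hx => hx.1) fun x hx => by have := hx.2; omega
        | succ j ihj =>
          refine FS.cut (fun x => c x < -N + j)
            (fun x hx y hy hxy h => (hc' hx.1 hy.1 hxy).trans_lt h) ?_ ?_
          · convert ihj using 1
            ext x
            simp only [Set.mem_ofPred_eq]
            exact ⟨fun h => ⟨h.1.1, h.2⟩, fun h => ⟨⟨h.1, by push_cast; omega⟩, h.2⟩⟩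
          · convert h1 (-N + j) using 1
            ext x
            simp only [Set.mem_ofPred_eq]
            push_cast
            exact ⟨fun h => ⟨h.1.1, by omega⟩, fun h => ⟨⟨h.1, by omega⟩, by omega⟩⟩
      refine FS.cut (fun x => c x < -N + (2 * N : ℕ))
        (fun x hx y hy hxy h => (hc' hx hy hxy).trans_lt h) (h3 _) ?_
      refine h2 _ (fun x hx => hx.1) fun x hx => ?_
      have := hx.2
      push_cast at this
      omega

end Labels

/-! ### Oscillation -/

/-- Reading the elements of the symmetric difference of `X` and `Y` below `N` in increasing order, the
number of maximal blocks of consecutive elements from the same side, together with the side of the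
last block (`some true` for `X`, `some false` for `Y`, `none` if there is no block). -/
def osc (X Y : Finset ℕ) : ℕ → ℕ × Option Bool
  | 0 => (0, none)
  | N + 1 => if (N ∈ X ↔ N ∈ Y) ∨ (osc X Y N).2 = some (decide (N ∈ X)) then osc X Y N
      else ((osc X Y N).1 + 1, some (decide (N ∈ X)))

theorem osc_congr {X X' Y Y' : Finset ℕ} {N : ℕ} (hX : ∀ i < N, i ∈ X ↔ i ∈ X')
    (hY : ∀ i < N, i ∈ Y ↔ i ∈ Y') : osc X Y N = osc X' Y' N := by
  induction N with
  | zero => rfl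
  | succ N ih =>
    rw [osc, osc, ih (fun i hi => hX i (by omega)) fun i hi => hY i (by omega)]
    simp only [hX N N.lt_succ_self, hY N N.lt_succ_self]

theorem osc_swap (X Y : Finset ℕ) (N : ℕ) :
    osc Y X N = ((osc X Y N).1, (osc X Y N).2.map not) := by
  induction N with
  | zero => rfl
  | succ N ih =>
    rw [osc, osc, ih]
    rcases osc X Y N with ⟨a, _ | _ | _⟩ <;> by_cases h : N ∈ X <;> by_cases h' : N ∈ Y <;>
      simp [h, h']

theorem osc_self (X : Finset ℕ) (N : ℕ) : osc X X N = (0, none) := by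
  induction N with
  | zero => rfl
  | succ N ih => rw [osc, ih]; simp

theorem osc_stable {X Y : Finset ℕ} {N M : ℕ} (hNM : N ≤ M) (hX : ∀ i ∈ X, i < N)
    (hY : ∀ i ∈ Y, i < N) : osc X Y M = osc X Y N := by
  induction M, hNM using Nat.le_induction with
  | base => rfl
  | succ M hM ih =>
    have h1 : M ∉ X := fun h => by have := hX M h; omega
    have h2 : M ∉ Y := fun h => by have := hY M h; omega
    rw [osc, if_pos (by simp [h1, h2]), ih]

theorem osc_block_aux {X Y : Finset ℕ} {N M : ℕ} (hNM : N ≤ M)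
    (hY : ∀ i, N ≤ i → i < M → i ∉ Y) (h : (osc X Y N).2 ≠ some true) :
    ((∀ i, N ≤ i → i < M → i ∉ X) → osc X Y M = osc X Y N) ∧
    ((∃ i, N ≤ i ∧ i < M ∧ i ∈ X) → osc X Y M = ((osc X Y N).1 + 1, some true)) := by
  induction M, hNM using Nat.le_induction with
  | base => exact ⟨fun _ => rfl, fun ⟨i, h1, h2, _⟩ => by omega⟩
  | succ M hM ih =>
    obtain ⟨ih1, ih2⟩ := ih fun i h1 h2 => hY i h1 (by omega)
    have hMY := hY M hM (by omega)
    refine ⟨fun hX => ?_, fun hX => ?_⟩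
    · have hMX := hX M hM (by omega)
      rw [osc, if_pos (by simp [hMX, hMY]), ih1 fun i h1 h2 => hX i h1 (by omega)]
    · rw [osc]
      by_cases hX' : ∃ i, N ≤ i ∧ i < M ∧ i ∈ X
      · rw [ih2 hX']
        by_cases hMX : M ∈ X <;> simp [hMX, hMY]
      · push Not at hX'
        have hMX : M ∈ X := by
          obtain ⟨i, h1, h2, h3⟩ := hX
          rcases Nat.lt_succ_iff_lt_or_eq.1 h2 with h2 | rfl
          · exact absurd h3 (hX' i h1 h2)
          · exact h3
        rw [ih1 hX']
        simp [hMX, hMY, h]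

/-- If `X` has an element in `[N, M)` and `Y` has none, and the current block is not one of `X`, then
exactly one block is added. -/
theorem osc_block {X Y : Finset ℕ} {N M p : ℕ} (hp : N ≤ p) (hpM : p < M) (hpX : p ∈ X)
    (hY : ∀ i, N ≤ i → i < M → i ∉ Y) (h : (osc X Y N).2 ≠ some true) :
    osc X Y M = ((osc X Y N).1 + 1, some true) :=
  (osc_block_aux (by omega) hY h).2 ⟨p, hp, hpM, hpX⟩

/-- The oscillation of `X` and `Y`: the number of maximal blocks of their symmetric difference. -/
def oscCount (X Y : Finset ℕ) : ℕ := (osc X Y (X.sup id + Y.sup id + 1)).1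

theorem oscCount_swap (X Y : Finset ℕ) : oscCount Y X = oscCount X Y := by
  rw [oscCount, oscCount, osc_swap, add_comm (Y.sup id)]

theorem oscCount_eq {X Y : Finset ℕ} {M : ℕ} (hX : ∀ i ∈ X, i < M) (hY : ∀ i ∈ Y, i < M) :
    oscCount X Y = (osc X Y M).1 := by
  rw [oscCount]
  have hX' : ∀ i ∈ X, i ≤ X.sup id := fun i hi => Finset.le_sup (f := id) hi
  have hY' : ∀ i ∈ Y, i ≤ Y.sup id := fun i hi => Finset.le_sup (f := id) hi
  rcases le_total M (X.sup id + Y.sup id + 1) with h | h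
  · rw [osc_stable h hX hY]
  · rw [osc_stable h (fun i hi => by have := hX' i hi; omega)
      fun i hi => by have := hY' i hi; omega]

theorem exists_bound (X : Finset ℕ) (N : ℕ) : ∃ M ≥ N, ∀ i ∈ X, i < M :=
  ⟨max N (X.sup id + 1), le_max_left _ _, fun _ hi =>
    lt_max_of_lt_right (Nat.lt_succ_of_le (Finset.le_sup (f := id) hi))⟩

section Osc

variable {C : Type u}

/-- The set `F` witnesses that `D` is `(n + 1)`-rich. -/
def Wit (P : C → Finset ℕ) (n : ℕ) (D : Set C) (F : Finset ℕ) : Prop :=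
  ∀ N, ∃ D' ⊆ D, Rich P n D' ∧
      (∀ x ∈ D', ∀ i < N, i ∈ P x ↔ i ∈ F) ∧ ∃ p ≥ N, ∀ x ∈ D', p ∈ P x

theorem Wit.of_succ {P : C → Finset ℕ} {n : ℕ} {D : Set C} {F : Finset ℕ}
    (h : Wit P (n + 1) D F) : Wit P n D F := fun N => by
  obtain ⟨E, hE, h, hp⟩ := h N
  exact ⟨E, hE, h.of_succ, hp⟩

/-- From witnesses `F` and `G` of richness one obtains pairs of labels with `k + 2` further oscillations.
Each step passes to a subset `A'` of `A` whose labels contain a common `p ≥ N` and exchanges the roles of the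
two sides, thus adding one block. -/
theorem exists_oscCount_aux {P : C → Finset ℕ} (k : ℕ) : ∀ (A B : Set C) (F G : Finset ℕ) (N : ℕ),
    Wit P k A F → Wit P k B G → (∀ i ∈ F, i < N) → (∀ i ∈ G, i < N) →
    (osc F G N).2 ≠ some true →
    ∃ x ∈ A, ∃ y ∈ B, oscCount (P x) (P y) = (osc F G N).1 + k + 2 := by
  induction k with
  | zero =>
    intro A B F G N hA hB hF hG hs
    obtain ⟨A', hA', hne, hag, p, hp, hpx⟩ := hA N
    obtain ⟨x, hx⟩ := hne.nonempty
    obtain ⟨M, hNM, hM⟩ := exists_bound (P x) N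
    obtain ⟨B', hB', hne', hag', q, hq, hqy⟩ := hB M
    obtain ⟨y, hy⟩ := hne'.nonempty
    obtain ⟨L, hML, hL⟩ := exists_bound (P y) M
    refine ⟨x, hA' hx, y, hB' hy, ?_⟩
    have hN : osc (P x) (P y) N = osc F G N :=
      osc_congr (hag x hx) fun i hi => hag' y hy i (by omega)
    have h1 : osc (P x) (P y) M = ((osc F G N).1 + 1, some true) := by
      rw [← hN] at hs ⊢
      refine osc_block hp (hM p (hpx x hx)) (hpx x hx) (fun i hi hiM h => ?_) hs
      have := hG i ((hag' y hy i hiM).1 h)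
      omega
    have h2 : osc (P y) (P x) L = ((osc F G N).1 + 2, some true) := by
      have h3 : osc (P y) (P x) M = ((osc F G N).1 + 1, some false) := by rw [osc_swap, h1]; rfl
      rw [osc_block hq (hL q (hqy y hy)) (hqy y hy) (fun i hi hiL h => ?_) (by simp [h3]), h3]
      have := hM i h
      omega
    rw [← oscCount_swap, oscCount_eq hL fun i hi => (hM i hi).trans_le hML, h2]
  | succ k ih =>
    intro A B F G N hA hB hF hG hs
    obtain ⟨A', hA', ⟨F', hF'⟩, hag, p, hp, hpx⟩ := hA N
    have hmem : ∀ i, ∃ x ∈ A', i ∈ P x ↔ i ∈ F' := by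
      intro i
      obtain ⟨A'', hA'', hne, hag', -⟩ := hF' (i + 1)
      obtain ⟨x, hx⟩ := hne.nonempty
      exact ⟨x, hA'' hx, hag' x hx i (by omega)⟩
    have hFF' : ∀ i < N, i ∈ F' ↔ i ∈ F := by
      intro i hi
      obtain ⟨x, hx, h⟩ := hmem i
      rw [← h, hag x hx i hi]
    have hpF' : p ∈ F' := by
      obtain ⟨x, hx, h⟩ := hmem p
      exact h.1 (hpx x hx)
    obtain ⟨M, hNM, hM⟩ := exists_bound F' N
    have hN : osc F' G N = osc F G N := osc_congr hFF' fun _ _ => Iff.rfl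
    have h1 : osc F' G M = ((osc F G N).1 + 1, some true) := by
      rw [← hN] at hs ⊢
      refine osc_block hp (hM p hpF') hpF' (fun i hi hiM h => ?_) hs
      have := hG i h
      omega
    have h2 : osc G F' M = ((osc F G N).1 + 1, some false) := by rw [osc_swap, h1]; rfl
    obtain ⟨y, hy, x, hx, h⟩ := ih B A' G F' M hB.of_succ hF' (fun i hi => (hG i hi).trans_le hNM)
      hM (by simp [h2])
    refine ⟨x, hA' hx, y, hy, ?_⟩
    rw [← oscCount_swap, h, h2]
    dsimp only
    omega

/-- A set which is `n`-rich for all `n` realizes all oscillations from `2` on. -/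
theorem exists_oscCount {P : C → Finset ℕ} {D : Set C} (h : ∀ n, Rich P n D) (k : ℕ) :
    ∃ x ∈ D, ∃ y ∈ D, oscCount (P x) (P y) = k + 2 := by
  obtain ⟨F, hF⟩ := h (k + 1)
  obtain ⟨N, -, hN⟩ := exists_bound F 0
  obtain ⟨x, hx, y, hy, h⟩ := exists_oscCount_aux k D D F F N hF hF hN hN (by simp [osc_self])
  exact ⟨x, hx, y, hy, by rw [h, osc_self]; simp⟩

/-- In a scattered countable chain of infinite rank, pairs have no finite big Ramsey degree: color a
pair by the oscillation of its labels, truncated at `t + 2`. The image of a self-embedding also has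
infinite rank, so it is `n`-rich for all `n` and realizes the `t + 1` colors `2, …, t + 2`. -/
theorem finiteHausdorffRank_of_bigRamsey [LinearOrder C] [Countable C] (hC : Scattered C) {t : ℕ}
    (h : BigRamseyDegLE (Fin 2) C t) : FiniteHausdorffRank C := by
  by_contra hr
  obtain ⟨P, hP⟩ := (IsKSum.of_scattered hC).exists_rich
  obtain ⟨w, hw⟩ := h (t + 3) fun f => ⟨min (oscCount (P (f 0)) (P (f 1))) (t + 2), by omega⟩
  have hrich : ∀ n, Rich P n (Set.range w) := by
    intro n
    by_contra hn
    exact hr ⟨_, (hP n _ (Set.subset_univ _) hn).hs.inHausdorff w fun x => ⟨x, rfl⟩⟩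
  have hpair : ∀ k : ℕ, ∃ f : Fin 2 ↪o C, oscCount (P (w (f 0))) (P (w (f 1))) = k + 2 := by
    intro k
    obtain ⟨_, ⟨x, rfl⟩, _, ⟨y, rfl⟩, h⟩ := exists_oscCount hrich k
    have hmk : ∀ x y : C, x < y → ∃ f : Fin 2 ↪o C, f 0 = x ∧ f 1 = y := fun x y hxy =>
      ⟨OrderEmbedding.ofStrictMono ![x, y] (by
        rw [Fin.strictMono_iff_lt_succ]
        simpa using hxy), rfl, rfl⟩
    rcases lt_trichotomy x y with hxy | rfl | hxy
    · obtain ⟨f, rfl, rfl⟩ := hmk x y hxy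
      exact ⟨f, h⟩
    · simp [oscCount, osc_self] at h
    · obtain ⟨f, rfl, rfl⟩ := hmk y x hxy
      exact ⟨f, by rw [oscCount_swap, h]⟩
  have hinj : Function.Injective fun k : Fin (t + 1) => (⟨k + 2, by omega⟩ : Fin (t + 3)) := by
    intro a b hab
    simp only [Fin.mk.injEq] at hab
    omega
  have hle := (Set.ncard_le_ncard (s := Set.range fun k : Fin (t + 1) =>
    (⟨k + 2, by omega⟩ : Fin (t + 3))) (by
      rintro _ ⟨k, rfl⟩
      obtain ⟨f, hf⟩ := hpair k
      refine ⟨f, Fin.ext ?_⟩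
      change min (oscCount (P (w (f 0))) (P (w (f 1)))) (t + 2) = k + 2
      omega)).trans hw
  rw [← Set.image_univ, Set.ncard_image_of_injective _ hinj, Set.ncard_univ, Nat.card_fin] at hle
  omega

end Osc

/-- A countable chain has finite big Ramsey spectrum if and only if it is non-scattered,
or it is a scattered chain of finite Hausdorff rank. -/
theorem countable_chain_finite_bigRamsey_spectrum_iff
    (C : Type u) [LinearOrder C] [Countable C] :
    (∀ n : ℕ, 1 ≤ n → ∃ t : ℕ, BigRamseyDegLE (Fin n) C t) ↔
      (¬ Scattered C ∨ (Scattered C ∧ FiniteHausdorffRank C)) := by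
  constructor
  · intro h
    by_cases hC : Scattered C
    · obtain ⟨t, ht⟩ := h 2 (by omega)
      exact Or.inr ⟨hC, finiteHausdorffRank_of_bigRamsey hC ht⟩
    · exact Or.inl hC
  · rintro (h | h) n -
    · exact bigRamsey_of_not_scattered C h n
    · exact bigRamsey_of_finiteHausdorffRank C h.2 n
end

section
/- For every n ∈ ℕ there are, up to biembeddability, only finitely many additively indecomposable countable scattered chains of Hausdorff rank at most n; that is, there is a finite set of countable chains such that every additively indecomposable countable scattered chain of Hausdorff rank ≤ n is biembeddable with one of them. -/
/-!
A chain is decomposed into finitely many convex pieces drawn from a class of chains; an additively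
indecomposable chain that embeds into such a finite sum embeds into one of the pieces
(`FinSum.exists_summand`). Hence it suffices to find, for each `n`, a finite family of
types of chains such that any two chains of the same type embed into each other and every chain of
rank at most `n` is a finite sum of typed chains (`exists_types`).

This is proved by induction on `n`. A ℤ-sum of chains of lower rank is the sum of an ω*-sum and an
ω-sum. In an ω-sum whose terms are finite sums of chains with types in the finite set `K`, only
finitely many terms involve a type that occurs in just finitely many terms. Up to a finite sum, one is therefore
left with an ω-sum whose terms are finite sums over a set `S ⊆ K`, each type in `S` occurring
in arbitrarily late terms (`finSum_of_nat`). A greedy choice embeds any ω-sum of this kind into any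
other one with the same `S` (`OmegaSum.embeds`), so `S` is a new type, and there are only finitely
many sets `S`. The ω*-sums are handled by passing to order duals.
-/

universe u v

/-- `FinSum P C`: the chain `C` is, up to isomorphism, a finite (possibly empty) sum of chains
in the class `P`. Finite sums are generated by splitting a chain into an initial segment
and its complement. -/
inductive FinSum (P : ∀ (C : Type u) [LinearOrder C], Prop) :
    ∀ (C : Type u) [LinearOrder C], Prop
  | base (C : Type u) [LinearOrder C] : P C → FinSum P C
  | empty (C : Type u) [LinearOrder C] : IsEmpty C → FinSum P C
  | iso (C D : Type u) [LinearOrder C] [LinearOrder D] : FinSum P C → (C ≃o D) → FinSum P D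
  | add (C : Type u) [LinearOrder C] (A : Set C) : IsLowerSet A → FinSum P A →
      FinSum P (Aᶜ : Set C) → FinSum P C

/-- The class of the order duals of the chains in `P`. -/
def DualClass (P : ∀ (C : Type u) [LinearOrder C], Prop) (D : Type u) [LinearOrder D] : Prop :=
  ∃ (E : Type u) (_ : LinearOrder E), P E ∧ Nonempty (D ≃o Eᵒᵈ)

/-- `OmegaSum T S C`: the chain `C` is an ω-sum (with terms the fibers of `c`) of finite sums of
chains with types in `S`, and for each type in `S` a chain of that type embeds into
arbitrarily late terms. -/
def OmegaSum {K : Type} (T : K → ∀ (C : Type u) [LinearOrder C], Prop) (S : Set K)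
    (C : Type u) [LinearOrder C] : Prop :=
  ∃ c : C → ℕ, Monotone c ∧
    (∀ i, FinSum (fun D _ => ∃ k ∈ S, T k D) {x : C // c x = i}) ∧
    ∀ s ∈ S, ∀ N, ∃ i, N ≤ i ∧ ∃ (D : Type u) (_ : LinearOrder D), T s D ∧
      Nonempty (D ↪o {x : C // c x = i})

/-! ### Finite sums -/

theorem FinSum.bind {P Q : ∀ (C : Type u) [LinearOrder C], Prop}
    (h : ∀ (C : Type u) [LinearOrder C], P C → FinSum Q C) {C : Type u} [LinearOrder C]
    (hC : FinSum P C) : FinSum Q C := by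
  induction hC with
  | base C hP => exact h C hP
  | empty C hE => exact .empty C hE
  | iso C D _ e ih => exact .iso C D ih e
  | add C A hA _ _ ih1 ih2 => exact .add C A hA ih1 ih2

theorem FinSum.mono {P Q : ∀ (C : Type u) [LinearOrder C], Prop}
    (h : ∀ (C : Type u) [LinearOrder C], P C → Q C) {C : Type u} [LinearOrder C]
    (hC : FinSum P C) : FinSum Q C :=
  hC.bind fun C _ hP => .base C (h C hP)

/-- The summands may be taken to embed into the whole sum. -/
theorem FinSum.summand_embeds {P : ∀ (C : Type u) [LinearOrder C], Prop}
    {C : Type u} [LinearOrder C] (hC : FinSum P C) :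
    ∀ (E : Type u) [LinearOrder E], (C ↪o E) →
      FinSum (fun D _ => P D ∧ Nonempty (D ↪o E)) C := by
  induction hC with
  | base C hP => exact fun E _ f => .base C ⟨hP, ⟨f⟩⟩
  | empty C hE => exact fun E _ f => .empty C hE
  | iso C D _ e ih => exact fun E _ f => .iso C D (ih E (e.toOrderEmbedding.trans f)) e
  | add C A hA _ _ ih1 ih2 =>
    exact fun E _ f => .add C A hA (ih1 E ((OrderEmbedding.subtype _).trans f))
      (ih2 E ((OrderEmbedding.subtype _).trans f))

theorem FinSum.dual {P : ∀ (C : Type u) [LinearOrder C], Prop}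
    {C : Type u} [LinearOrder C] (hC : FinSum P C) : FinSum (DualClass P) Cᵒᵈ := by
  induction hC with
  | base C hP => exact .base _ ⟨C, _, hP, ⟨OrderIso.refl _⟩⟩
  | empty C hE => exact .empty _ ⟨fun x => hE.false (OrderDual.ofDual x)⟩
  | iso C D _ e ih => exact .iso _ _ ih e.dual
  | add C A hA _ _ ih1 ih2 =>
    -- the dual of the final segment `Aᶜ` is the initial segment of the dual chain
    let B : Set Cᵒᵈ := {x | OrderDual.ofDual x ∉ A}
    refine .add _ B ?_ ?_ ?_
    · intro x y hxy hx hy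
      exact hx (hA (show OrderDual.ofDual x ≤ OrderDual.ofDual y from hxy) hy)
    · refine .iso _ _ ih2
        { toFun := fun x => ⟨OrderDual.toDual (OrderDual.ofDual x).1, (OrderDual.ofDual x).2⟩
          invFun := fun y => OrderDual.toDual ⟨OrderDual.ofDual y.1, y.2⟩
          left_inv := fun x => rfl
          right_inv := fun x => rfl
          map_rel_iff' := Iff.rfl }
    · refine .iso _ _ ih1
        { toFun := fun x => ⟨OrderDual.toDual (OrderDual.ofDual x).1,
            fun h => h (OrderDual.ofDual x).2⟩
          invFun := fun y => OrderDual.toDual ⟨OrderDual.ofDual y.1, not_not.1 y.2⟩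
          left_inv := fun x => rfl
          right_inv := fun x => rfl
          map_rel_iff' := Iff.rfl }

/-- An additively indecomposable chain that embeds into a finite sum embeds into a summand. -/
theorem FinSum.exists_summand {P : ∀ (C : Type u) [LinearOrder C], Prop}
    {C : Type u} [LinearOrder C] (hC : FinSum P C) (L : Type u) [LinearOrder L]
    (hL : AddIndecomposable L) : (L ↪o C) →
    IsEmpty L ∨ ∃ (D : Type u) (_ : LinearOrder D), P D ∧ Nonempty (L ↪o D) ∧
      Nonempty (D ↪o C) := by
  induction hC with
  | base C hP => exact fun f => .inr ⟨C, _, hP, ⟨f⟩, ⟨RelEmbedding.refl _⟩⟩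
  | empty C hE => exact fun f => .inl ⟨fun x => hE.false (f x)⟩
  | iso C D _ e ih =>
    intro f
    rcases ih (f.trans e.symm.toOrderEmbedding) with h | ⟨D, _, hD, hLD, ⟨g⟩⟩
    · exact .inl h
    · exact .inr ⟨D, _, hD, hLD, ⟨g.trans e.toOrderEmbedding⟩⟩
  | add C A hA _ _ ih1 ih2 =>
    intro f
    rcases hL (f ⁻¹' A) (fun x hx y hy => hA (f.monotone hy) hx) with ⟨⟨g⟩⟩ | ⟨⟨g⟩⟩
    · rcases ih1 (OrderEmbedding.ofStrictMono (fun x => ⟨f (g x).1, (g x).2⟩)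
        (fun x y hxy => f.strictMono (g.strictMono hxy))) with h | ⟨D, _, hD, hLD, ⟨k⟩⟩
      · exact .inl h
      · exact .inr ⟨D, _, hD, hLD, ⟨k.trans (OrderEmbedding.subtype _)⟩⟩
    · rcases ih2 (OrderEmbedding.ofStrictMono (fun x => ⟨f (g x).1, (g x).2⟩)
        (fun x y hxy => f.strictMono (g.strictMono hxy))) with h | ⟨D, _, hD, hLD, ⟨k⟩⟩
      · exact .inl h
      · exact .inr ⟨D, _, hD, hLD, ⟨k.trans (OrderEmbedding.subtype _)⟩⟩

/-! ### ω-sums -/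

/-- If `C'` contains chains of each type in `S` arbitrarily far along `c'`, then every finite sum
of chains with types in `S` embeds into a bounded stretch of `C'` starting at any given place. -/
theorem FinSum.embeds_interval {K : Type} {T : K → ∀ (C : Type u) [LinearOrder C], Prop}
    (hT : ∀ k (C D : Type u) [LinearOrder C] [LinearOrder D], T k C → T k D → Nonempty (C ↪o D))
    {S : Set K} {C' : Type u} [LinearOrder C'] {c' : C' → ℕ} (hc' : Monotone c')
    (hS : ∀ s ∈ S, ∀ N, ∃ i, N ≤ i ∧ ∃ (D : Type u) (_ : LinearOrder D), T s D ∧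
      Nonempty (D ↪o {x : C' // c' x = i}))
    {W : Type u} [LinearOrder W] (hW : FinSum (fun D _ => ∃ k ∈ S, T k D) W) :
    ∀ N, ∃ M, Nonempty (W ↪o {x : C' // N ≤ c' x ∧ c' x < M}) := by
  induction hW with
  | base W hP =>
    intro N
    obtain ⟨k, hk, hTW⟩ := hP
    obtain ⟨i, hi, D, _, hD, ⟨f⟩⟩ := hS k hk N
    obtain ⟨g⟩ := hT k W D hTW hD
    exact ⟨i + 1, ⟨OrderEmbedding.ofStrictMono
      (fun x => ⟨(f (g x)).1, by have := (f (g x)).2; omega⟩)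
      (fun x y hxy => f.strictMono (g.strictMono hxy))⟩⟩
  | empty W hE => exact fun N => ⟨N, ⟨OrderEmbedding.ofIsEmpty⟩⟩
  | iso W D _ e ih =>
    intro N
    obtain ⟨M, ⟨f⟩⟩ := ih N
    exact ⟨M, ⟨e.symm.toOrderEmbedding.trans f⟩⟩
  | add W A hA _ _ ih1 ih2 =>
    intro N
    obtain ⟨M₁, ⟨f⟩⟩ := ih1 N
    obtain ⟨M₂, ⟨g⟩⟩ := ih2 (max N M₁)
    classical
    refine ⟨max M₁ M₂, ⟨OrderEmbedding.ofStrictMono (fun x => if h : x ∈ A then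
        ⟨(f ⟨x, h⟩).1, by have := (f ⟨x, h⟩).2; omega⟩ else
        ⟨(g ⟨x, h⟩).1, by have := (g ⟨x, h⟩).2; omega⟩) ?_⟩⟩
    intro x y hxy
    by_cases hy : y ∈ A
    · have hx : x ∈ A := hA hxy.le hy
      simp only [hx, hy, dif_pos]
      exact f.strictMono (show (⟨x, hx⟩ : A) < ⟨y, hy⟩ from hxy)
    · by_cases hx : x ∈ A
      · simp only [hx, hy, dif_pos, dif_neg, not_false_eq_true]
        refine hc'.reflect_lt (?_ : c' (f ⟨x, hx⟩).1 < c' (g ⟨y, hy⟩).1)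
        have h₁ := (f ⟨x, hx⟩).2
        have h₂ := (g ⟨y, hy⟩).2
        omega
      · simp only [hx, hy, dif_neg, not_false_eq_true]
        exact g.strictMono (show (⟨x, hx⟩ : (Aᶜ : Set W)) < ⟨y, hy⟩ from hxy)

/-- Two ω-sums over the same set of types embed into each other: send the terms of the first one
successively into disjoint bounded stretches of the second. -/
theorem OmegaSum.embeds {K : Type} {T : K → ∀ (C : Type u) [LinearOrder C], Prop}
    (hT : ∀ k (C D : Type u) [LinearOrder C] [LinearOrder D], T k C → T k D → Nonempty (C ↪o D))
    {S : Set K} {C C' : Type u} [LinearOrder C] [LinearOrder C']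
    (h : OmegaSum T S C) (h' : OmegaSum T S C') : Nonempty (C ↪o C') := by
  obtain ⟨c, hc, hfin, -⟩ := h
  obtain ⟨c', hc', -, hS⟩ := h'
  have key : ∀ i N, ∃ M, Nonempty ({x : C // c x = i} ↪o {x : C' // N ≤ c' x ∧ c' x < M}) :=
    fun i => (hfin i).embeds_interval hT hc' hS
  choose M e using key
  have e' := fun i N => (e i N).some
  -- the `i`-th term of `C` goes into the stretch of `C'` with indices in `[p i, p (i + 1))`
  let p : ℕ → ℕ := fun i => Nat.rec 0 (fun i q => max q (M i q)) i
  have hp : ∀ i, p (i + 1) = max (p i) (M i (p i)) := fun i => rfl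
  have hpm : Monotone p := monotone_nat_of_le_succ fun i => by rw [hp]; exact le_max_left _ _
  have hcast : ∀ x i (hx : c x = i),
      (e' (c x) (p (c x)) ⟨x, rfl⟩).1 = (e' i (p i) ⟨x, hx⟩).1 := by
    rintro x _ rfl; rfl
  refine ⟨OrderEmbedding.ofStrictMono (fun x => (e' (c x) (p (c x)) ⟨x, rfl⟩).1) ?_⟩
  intro x y hxy
  rcases (hc hxy.le).eq_or_lt with h | h
  · show (e' (c x) (p (c x)) ⟨x, rfl⟩).1 < (e' (c y) (p (c y)) ⟨y, rfl⟩).1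
    rw [hcast x _ h]
    exact (e' (c y) (p (c y))).strictMono
      (show (⟨x, h⟩ : {x : C // c x = c y}) < ⟨y, rfl⟩ from hxy)
  · refine hc'.reflect_lt
      (?_ : c' (e' (c x) (p (c x)) ⟨x, rfl⟩).1 < c' (e' (c y) (p (c y)) ⟨y, rfl⟩).1)
    have h₁ := (e' (c x) (p (c x)) ⟨x, rfl⟩).2.2
    have h₂ := (e' (c y) (p (c y)) ⟨y, rfl⟩).2.1
    have h₃ := hpm (Nat.succ_le_of_lt h)
    have h₄ := hp (c x)
    simp only [Nat.succ_eq_add_one] at h₃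
    omega

/-- An isomorphism between a subset of a subtype and the corresponding subtype. -/
def subtypeIso {C : Type u} [LinearOrder C] (p q : C → Prop) (h : ∀ x, q x → p x) :
    {x : C // q x} ≃o {y : {x : C // p x} // q y.1} where
  toFun x := ⟨⟨x.1, h _ x.2⟩, x.2⟩
  invFun y := ⟨y.1.1, y.2⟩
  left_inv _ := rfl
  right_inv _ := rfl
  map_rel_iff' := Iff.rfl

theorem finSum_initial {P : ∀ (C : Type u) [LinearOrder C], Prop} {C : Type u} [LinearOrder C]
    {c : C → ℕ} (hc : Monotone c) (h : ∀ i, FinSum P {x : C // c x = i}) (N : ℕ) :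
    FinSum P {x : C // c x < N} := by
  induction N with
  | zero => exact .empty _ ⟨fun x => by have := x.2; omega⟩
  | succ N ih =>
    refine .add _ {y | c y.1 < N} (fun x y hxy hx => lt_of_le_of_lt (hc hxy) hx) ?_ ?_
    · exact .iso _ _ ih (subtypeIso _ _ fun x hx => by omega)
    · refine .iso _ _ (h N) ((subtypeIso (fun x => c x < N + 1) (fun x => c x = N)
        fun x hx => by omega).trans (OrderIso.setCongr _ _ ?_))
      ext ⟨x, hx⟩
      change c x = N ↔ ¬ c x < N
      omega

/-- An ω-sum of finite sums of typed chains, with finitely many types, is a finite sum of typed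
chains and of one chain in which every type that occurs does so in arbitrarily late terms. -/
theorem finSum_of_nat {K : Type} [Finite K] {T : K → ∀ (C : Type u) [LinearOrder C], Prop}
    {C : Type u} [LinearOrder C] (c : C → ℕ) (hc : Monotone c)
    (h : ∀ i, FinSum (fun D _ => ∃ k, T k D) {x : C // c x = i}) :
    FinSum (fun D _ => (∃ k, T k D) ∨ ∃ S, OmegaSum T S D) C := by
  let occ : K → ℕ → Prop := fun k i => ∃ (D : Type u) (_ : LinearOrder D), T k D ∧
    Nonempty (D ↪o {x : C // c x = i})
  let S : Set K := {k | ∃ᶠ i in Filter.atTop, occ k i}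
  have hev : ∀ᶠ i in Filter.atTop, ∀ k, occ k i → k ∈ S := by
    rw [Filter.eventually_all]
    intro k
    by_cases hk : k ∈ S
    · exact Filter.Eventually.of_forall fun _ _ => hk
    · have hk' : ∀ᶠ i in Filter.atTop, ¬ occ k i := Filter.not_frequently.1 hk
      exact hk'.mono fun i hi h => absurd h hi
  obtain ⟨N, hN⟩ := Filter.eventually_atTop.1 hev
  refine .add _ {x | c x < N} (fun x y hxy hx => lt_of_le_of_lt (hc hxy) hx) ?_ ?_
  · exact (finSum_initial hc h N).mono fun _ _ hD => .inl hD
  · refine .base _ (.inr ⟨S, fun x => c x.1, fun x y hxy => hc hxy, ?_, ?_⟩)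
    · intro i
      rcases lt_or_ge i N with hi | hi
      · exact .empty _ ⟨fun x => x.1.2 (show c x.1.1 < N from by have : c x.1.1 = i := x.2; omega)⟩
      · refine .iso _ _ (((h i).summand_embeds _ (RelEmbedding.refl _)).mono ?_)
          (subtypeIso (fun x => x ∈ ({x | c x < N}ᶜ : Set C)) (fun x => c x = i)
            fun x hx => show ¬ c x < N by omega)
        rintro D _ ⟨⟨k, hk⟩, hD⟩
        exact ⟨k, hN i hi k ⟨D, _, hk, hD⟩, hk⟩
    · intro s hs M
      obtain ⟨i, hi, D, _, hD, ⟨f⟩⟩ := Filter.frequently_atTop.1 hs (max M N)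
      exact ⟨i, by omega, D, _, hD, ⟨f.trans
        (subtypeIso (fun x => x ∈ ({x | c x < N}ᶜ : Set C)) (fun x => c x = i)
          fun x hx => show ¬ c x < N by omega).toOrderEmbedding⟩⟩

/-! ### ℤ-sums and the induction on the rank -/

theorem DualClass.embeds {P : ∀ (C : Type u) [LinearOrder C], Prop}
    (hP : ∀ (C D : Type u) [LinearOrder C] [LinearOrder D], P C → P D → Nonempty (C ↪o D))
    (C D : Type u) [LinearOrder C] [LinearOrder D]
    (hC : DualClass P C) (hD : DualClass P D) : Nonempty (C ↪o D) := by
  obtain ⟨E, _, hE, ⟨e⟩⟩ := hC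
  obtain ⟨F, _, hF, ⟨f⟩⟩ := hD
  obtain ⟨g⟩ := hP E F hE hF
  exact ⟨(e.toOrderEmbedding.trans g.dual).trans f.symm.toOrderEmbedding⟩

/-- Finite sums over a doubly dual class are finite sums over the class. -/
theorem FinSum.of_dual_dual {P : ∀ (C : Type u) [LinearOrder C], Prop} {C : Type u}
    [LinearOrder C] (h : DualClass (DualClass P) C) : FinSum P C := by
  obtain ⟨E, _, ⟨F, _, hF, ⟨f⟩⟩, ⟨e⟩⟩ := h
  exact .iso _ _ (.base F hF) (((OrderIso.dualDual F).trans f.symm.dual).trans e.symm)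

/-- The ℤ-indexed analogue of `finSum_of_nat`: the negative part is an ω*-sum, that is, the dual of
an ω-sum of duals of typed chains. -/
theorem finSum_of_int {K : Type} [Finite K] {T : K → ∀ (C : Type u) [LinearOrder C], Prop}
    {C : Type u} [LinearOrder C] (c : C → ℤ) (hc : Monotone c)
    (h : ∀ i, FinSum (fun D _ => ∃ k, T k D) {x : C // c x = i}) :
    FinSum (fun D _ => (∃ k, T k D) ∨ (∃ S, OmegaSum T S D) ∨
      ∃ S, DualClass (OmegaSum (fun k => DualClass (T k)) S) D) C := by
  refine .add _ {x | c x < 0} (fun x y hxy hx => lt_of_le_of_lt (hc hxy) hx) ?_ ?_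
  · have key : FinSum (fun D _ => (∃ k, DualClass (T k) D) ∨
        ∃ S, OmegaSum (fun k => DualClass (T k)) S D) ({x : C // c x < 0})ᵒᵈ := by
      refine finSum_of_nat (fun x => (-1 - c (OrderDual.ofDual x).1).toNat) ?_ ?_
      · intro x y hxy
        have : c (OrderDual.ofDual y).1 ≤ c (OrderDual.ofDual x).1 := hc hxy
        show Int.toNat _ ≤ Int.toNat _
        omega
      · intro i
        refine FinSum.mono ?_ (FinSum.iso _ _ (h (-1 - i)).dual
          { toFun := fun x => ⟨OrderDual.toDual ⟨(OrderDual.ofDual x).1,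
              by have := (OrderDual.ofDual x).2; omega⟩,
              by have := (OrderDual.ofDual x).2
                 show Int.toNat (-1 - c (OrderDual.ofDual x).1) = i
                 omega⟩
            invFun := fun y => OrderDual.toDual ⟨(OrderDual.ofDual y.1).1, by
              have h₁ := (OrderDual.ofDual y.1).2
              have h₂ := y.2
              omega⟩
            left_inv := fun x => rfl
            right_inv := fun x => rfl
            map_rel_iff' := Iff.rfl })
        rintro D _ ⟨E, _, ⟨k, hk⟩, hE⟩
        exact ⟨k, E, _, hk, hE⟩
    refine FinSum.bind ?_ (FinSum.iso _ _ key.dual (OrderIso.dualDual _).symm)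
    rintro D _ ⟨E, _, ⟨k, hk⟩ | ⟨S, hS⟩, hE⟩
    · exact (FinSum.of_dual_dual ⟨E, _, hk, hE⟩).mono fun _ _ hD => .inl ⟨k, hD⟩
    · exact .base _ (.inr (.inr ⟨S, E, _, hS, hE⟩))
  · refine (finSum_of_nat (T := T) (fun x => (c x.1).toNat) ?_ ?_).mono ?_
    · intro x y hxy
      have : c x.1 ≤ c y.1 := hc hxy
      show Int.toNat _ ≤ Int.toNat _
      omega
    · intro i
      refine .iso _ _ (h i) ((subtypeIso (fun x => x ∈ ({x | c x < 0}ᶜ : Set C))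
        (fun x => c x = i) fun x hx => show ¬ c x < 0 by omega).trans
        (OrderIso.setCongr _ _ ?_))
      ext ⟨x, hx⟩
      replace hx : ¬ c x < 0 := hx
      change c x = i ↔ (c x).toNat = i
      omega
    · rintro D _ (hD | hD)
      · exact .inl hD
      · exact .inr (.inl hD)

/-- Finitely many types of chains, any two chains of the same type embedding into each other,
suffice to write every chain of rank at most `n` as a finite sum. A successor rank adds a new
type for each set of old types, once for ω-sums and once for ω*-sums. -/
theorem exists_types (n : ℕ) :
    ∃ (K : Type) (_ : Finite K) (T : K → ∀ (C : Type u) [LinearOrder C], Prop),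
      (∀ k (C D : Type u) [LinearOrder C] [LinearOrder D], T k C → T k D → Nonempty (C ↪o D)) ∧
      ∀ m ≤ n, ∀ (C : Type u) [LinearOrder C], InHausdorff m C →
        FinSum (fun D _ => ∃ k, T k D) C := by
  induction n with
  | zero =>
    -- a single type: the one-element chains
    refine ⟨Unit, inferInstance, fun _ C _ => Subsingleton C ∧ Nonempty C, ?_, ?_⟩
    · rintro _ C D _ _ ⟨_, _⟩ ⟨_, ⟨d⟩⟩
      exact ⟨OrderEmbedding.ofStrictMono (fun _ => d)
        fun x y hxy => absurd (Subsingleton.elim x y) hxy.ne⟩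
    · intro m hm C _ hC
      obtain rfl : m = 0 := by omega
      rw [InHausdorff] at hC
      rcases isEmpty_or_nonempty C with hE | hE
      · exact .empty _ hE
      · exact .base _ ⟨(), hC, hE⟩
  | succ n ih =>
    obtain ⟨K, _, T, hT, hdec⟩ := ih
    have hTd : ∀ k (C D : Type u) [LinearOrder C] [LinearOrder D],
        DualClass (T k) C → DualClass (T k) D → Nonempty (C ↪o D) :=
      fun k => DualClass.embeds (hT k)
    refine ⟨K ⊕ Set K ⊕ Set K, inferInstance, fun k C _ => match k with
      | .inl k => T k C
      | .inr (.inl S) => OmegaSum T S C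
      | .inr (.inr S) => DualClass (OmegaSum (fun k => DualClass (T k)) S) C, ?_, ?_⟩
    · rintro (k | S | S) C D _ _ hC hD
      · exact hT k C D hC hD
      · exact OmegaSum.embeds hT hC hD
      · exact DualClass.embeds (fun C D _ _ h h' => OmegaSum.embeds hTd h h') C D hC hD
    · intro m hm C _ hC
      rcases hm.lt_or_eq with hm | rfl
      · exact (hdec m (by omega) C hC).mono fun D _ ⟨k, hk⟩ => ⟨.inl k, hk⟩
      · rw [InHausdorff] at hC
        obtain ⟨c, hc, hfib⟩ := hC
        refine (finSum_of_int (T := T) c hc fun i => ?_).mono ?_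
        · obtain ⟨m, hm, h⟩ := hfib i
          exact hdec m hm _ h
        · rintro D _ (⟨k, hk⟩ | ⟨S, hS⟩ | ⟨S, hS⟩)
          exacts [⟨.inl k, hk⟩, ⟨.inr (.inl S), hS⟩, ⟨.inr (.inr S), hS⟩]

/-- For every `n ∈ ℕ` there are, up to biembeddability, only finitely many additively
indecomposable countable scattered chains of Hausdorff rank at most `n`: there is a finite
list of countable chains such that every additively indecomposable countable scattered chain
of Hausdorff rank `≤ n` is biembeddable with one of them. -/
theorem finitely_many_indecomposable_of_rank_le (n : ℕ) :
    ∃ (k : ℕ) (D : Fin k → Type u) (instD : ∀ j, LinearOrder (D j)),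
      (∀ j, Countable (D j)) ∧
      ∀ (C : Type u) [LinearOrder C] [Countable C],
        Scattered C → AddIndecomposable C → (∃ m : ℕ, m ≤ n ∧ InHausdorff m C) →
        ∃ j : Fin k, @Biembeddable C (D j) _ (instD j) := by
  obtain ⟨K, _, T, hT, hdec⟩ := exists_types.{u} n
  -- a countable representative of each type that has one; `none` stands for the empty chain
  have rep : ∀ o : Option K, ∃ (D : Type u) (_ : LinearOrder D), Countable D ∧
      (o = none → IsEmpty D) ∧ ∀ k, o = some k →
        (∃ (E : Type u) (_ : LinearOrder E), Countable E ∧ T k E) → T k D := by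
    rintro (_ | k)
    · exact ⟨PEmpty, inferInstance, inferInstance, fun _ => inferInstance, by simp⟩
    · by_cases h : ∃ (E : Type u) (_ : LinearOrder E), Countable E ∧ T k E
      · obtain ⟨E, i, hE, hk⟩ := h
        refine ⟨E, i, hE, by simp, ?_⟩
        rintro k' h _
        obtain rfl := Option.some.inj h
        exact hk
      · refine ⟨PEmpty, inferInstance, inferInstance, fun _ => inferInstance, ?_⟩
        rintro k' h' hE
        obtain rfl := Option.some.inj h'
        exact absurd hE h
  choose D inst hcount hnone hsome using rep
  obtain ⟨N, ⟨e⟩⟩ := Finite.exists_equiv_fin (Option K)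
  refine ⟨N, fun j => D (e.symm j), fun j => inst _, fun j => hcount _, ?_⟩
  rintro C _ _ - hind ⟨m, hm, hC⟩
  suffices h : ∃ o, Biembeddable C (D o) by
    obtain ⟨o, ho⟩ := h
    obtain ⟨j, rfl⟩ := e.symm.surjective o
    exact ⟨j, ho⟩
  rcases (hdec m hm C hC).exists_summand C hind (RelEmbedding.refl _) with
    hE | ⟨E, _, ⟨k, hk⟩, ⟨f⟩, ⟨g⟩⟩
  · have := hnone none rfl
    exact ⟨none, ⟨OrderEmbedding.ofIsEmpty⟩, ⟨OrderEmbedding.ofIsEmpty⟩⟩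
  · have hE : Countable E := g.injective.countable
    have hD := hsome (some k) k rfl ⟨E, _, hE, hk⟩
    obtain ⟨a⟩ := hT k _ _ hk hD
    obtain ⟨b⟩ := hT k _ _ hD hk
    exact ⟨some k, ⟨f.trans a⟩, ⟨b.trans g⟩⟩
end
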